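/- arXiv:2401.00612 — 3 statements merged into one kernel-verified Lean document; each statement's English description precedes it below -/
import Mathlib

section
/- Let (X, ‖·‖) be an infinite-dimensional separable real Banach space and let ε > 0. Then there exists an equivalent norm |||·||| on X with ‖x‖ ≤ |||x||| ≤ (1+ε)‖x‖ for all x ∈ X, such that (X, |||·|||) has an Auerbach basis {x_n, x_n*}_{n∈ℕ} (an M-basis with |||x_n||| = |||x_n*||| = 1 for all n, the dual norm taken with respect to |||·|||) with the property that for every permutation σ of ℕ there is no constant C < ∞ satisfying ‖Σ_{i≤m} a_i x_{σ(i)}‖ ≤ C‖Σ_{i≤n} a_i x_{σ(i)}‖ for all m ≤ n and all scalars; in particular no permutation of this Auerbach basis is equivalent to a Schauder basis of X. -/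
open scoped BigOperators

section NullUltrafilter

open Filter Topology

variable {Z : Type*} [NormedAddCommGroup Z] {V V' : Ultrafilter Z} {C C' : ℝ}

/-- The limit of `‖z + w‖` as `w` runs along an ultrafilter. -/
noncomputable def shiftNorm (V : Ultrafilter Z) (z : Z) : ℝ :=
  limUnder (V : Filter Z) fun w => ‖z + w‖

theorem tendsto_shiftNorm (hV : ∀ᶠ w in (V : Filter Z), ‖w‖ ≤ C) (z : Z) :
    Tendsto (fun w => ‖z + w‖) V (𝓝 (shiftNorm V z)) := by
  have hc : IsCompact (Set.Icc (0 : ℝ) (‖z‖ + C)) := isCompact_Icc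
  obtain ⟨l, -, hl⟩ := hc.ultrafilter_le_nhds (V.map fun w => ‖z + w‖) (by
    rw [Filter.le_principal_iff]
    show ∀ᶠ w in (V : Filter Z), ‖z + w‖ ∈ Set.Icc 0 (‖z‖ + C)
    filter_upwards [hV] with w hw
    exact ⟨norm_nonneg _, (norm_add_le _ _).trans (by linarith)⟩)
  exact tendsto_nhds_limUnder ⟨l, hl⟩

/-- The law of `w - y` where first `w` runs along `V`, then `y` runs along `V'`. -/
def subUltrafilter (V V' : Ultrafilter Z) : Ultrafilter Z :=
  V.bind fun w => V'.map fun y => w - y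

theorem eventually_subUltrafilter {p : Z → Prop} :
    (∀ᶠ y in (subUltrafilter V V' : Filter Z), p y) ↔ ∀ᶠ w in V, ∀ᶠ y in V', p (w - y) :=
  Iff.rfl

theorem eventually_norm_le_subUltrafilter (hV : ∀ᶠ w in (V : Filter Z), ‖w‖ ≤ C)
    (hV' : ∀ᶠ w in (V' : Filter Z), ‖w‖ ≤ C') :
    ∀ᶠ w in (subUltrafilter V V' : Filter Z), ‖w‖ ≤ C + C' := by
  rw [eventually_subUltrafilter]
  filter_upwards [hV] with w hw
  filter_upwards [hV'] with y hy
  exact (norm_sub_le _ _).trans (add_le_add hw hy)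

theorem shiftNorm_zero_sub_le (hV : ∀ᶠ w in (V : Filter Z), ‖w‖ ≤ C)
    (hV' : ∀ᶠ w in (V' : Filter Z), ‖w‖ ≤ C') :
    shiftNorm (subUltrafilter V V') 0 ≤ shiftNorm V' 0 + C := by
  refine le_of_forall_pos_le_add fun δ hδ => ?_
  refine le_of_tendsto (tendsto_shiftNorm (eventually_norm_le_subUltrafilter hV hV') 0) ?_
  rw [eventually_subUltrafilter]
  filter_upwards [hV] with w hw
  filter_upwards [(tendsto_shiftNorm hV' 0).eventually_lt_const (lt_add_of_pos_right _ hδ)] with y hy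
  have := norm_sub_le w y
  rw [zero_add] at hy ⊢
  linarith

/-- The law of the alternating sum `w₁ - w₂ + w₃ - ⋯ ± wₙ` of iterated copies. -/
def altUltrafilter (V : Ultrafilter Z) : ℕ → Ultrafilter Z
  | 0 => pure 0
  | n + 1 => subUltrafilter V (altUltrafilter V n)

theorem altUltrafilter_norm_le (hV : ∀ᶠ w in (V : Filter Z), ‖w‖ ≤ 1) (n : ℕ) :
    ∀ᶠ w in (altUltrafilter V n : Filter Z), ‖w‖ ≤ n := by
  induction n with
  | zero => exact (Filter.eventually_pure (a := (0 : Z))).2 (by simp)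
  | succ n ih =>
    have := eventually_norm_le_subUltrafilter hV ih
    push_cast
    rw [add_comm]
    exact this

theorem shiftNorm_alt_zero (z : Z) :
    shiftNorm (altUltrafilter V 0) z = ‖z‖ := by
  have h : Tendsto (fun w => ‖z + w‖) (altUltrafilter V 0 : Filter Z) (𝓝 ‖z‖) := by
    have := tendsto_pure_nhds (fun w => ‖z + w‖) (0 : Z)
    rwa [add_zero] at this
  exact h.limUnder_eq

/-- A sequence of at most linear growth cannot grow geometrically. -/
theorem exists_mul_succ_lt_of_le_succ_add_one {T : ℕ → ℝ} (h0 : 1 ≤ T 0)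
    (hT : ∀ n, T (n + 1) ≤ T n + 1) {q : ℝ} (hq0 : 0 < q) (hq : q < 1) :
    ∃ n, q * T (n + 1) < T n := by
  by_contra! h
  have hpow : ∀ n, 1 ≤ q ^ n * T n := by
    intro n
    induction n with
    | zero => simpa using h0
    | succ n ih =>
      rw [pow_succ, mul_assoc]
      exact ih.trans (mul_le_mul_of_nonneg_left (h n) (by positivity))
  have hlin : ∀ n : ℕ, T n ≤ T 0 + n := by
    intro n
    induction n with
    | zero => simp
    | succ n ih => push_cast; linarith [hT n]
  have hlim : Tendsto (fun n : ℕ => q ^ n * T 0 + n * q ^ n) atTop (𝓝 (0 * T 0 + 0)) :=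
    ((tendsto_pow_atTop_nhds_zero_of_lt_one hq0.le hq).mul_const _).add
      (tendsto_self_mul_const_pow_of_lt_one hq0.le hq)
  have : (1 : ℝ) ≤ 0 * T 0 + 0 := ge_of_tendsto' hlim fun n =>
    (hpow n).trans (by nlinarith [hlin n, pow_pos hq0 n])
  norm_num at this

variable [NormedSpace ℝ Z]

/-- An ultrafilter is null if every continuous linear functional vanishes along it. -/
def IsNullUltrafilter (V : Ultrafilter Z) : Prop :=
  ∀ f : Z →L[ℝ] ℝ, ∀ᶠ w in V, f w = 0

/-- In an infinite-dimensional space, finitely many functionals have a common zero on the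
unit sphere. -/
theorem exists_norm_eq_one_of_finite_functionals (hZ : ¬ FiniteDimensional ℝ Z)
    (G : Finset (Z →L[ℝ] ℝ)) : ∃ w : Z, ‖w‖ = 1 ∧ ∀ f ∈ G, f w = 0 := by
  let T : Z →ₗ[ℝ] (G → ℝ) := LinearMap.pi fun f => (f : Z →L[ℝ] ℝ).toLinearMap
  have hT : ¬ Function.Injective T := fun h => hZ (Module.Finite.of_injective T h)
  have : ∃ w : Z, T w = 0 ∧ w ≠ 0 := by
    by_contra! h
    exact hT ((injective_iff_map_eq_zero T).2 fun w hw => h w hw)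
  obtain ⟨w, hw, hw0⟩ := this
  refine ⟨‖w‖⁻¹ • w, ?_, fun f hf => ?_⟩
  · rw [norm_smul, norm_inv, norm_norm, inv_mul_cancel₀ (norm_ne_zero_iff.2 hw0)]
  · have : f w = 0 := congrFun hw ⟨f, hf⟩
    simp [this]

theorem exists_isNullUltrafilter_norm_eq_one (hZ : ¬ FiniteDimensional ℝ Z) :
    ∃ V : Ultrafilter Z, IsNullUltrafilter V ∧ ∀ᶠ w in (V : Filter Z), ‖w‖ = 1 := by
  classical
  let S : (Z →L[ℝ] ℝ) → Set Z := fun f => {w | ‖w‖ = 1 ∧ f w = 0}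
  obtain ⟨V, hV⟩ := Ultrafilter.exists_ultrafilter_of_finite_inter_nonempty (Set.range S) (by
    intro T hT
    obtain ⟨G, rfl⟩ : ∃ G : Finset (Z →L[ℝ] ℝ), G.image S = T := by
      obtain ⟨G, -, hG⟩ := Finset.subset_set_image_iff.1
        (show (T : Set (Set Z)) ⊆ S '' Set.univ by simpa using hT)
      exact ⟨G, hG⟩
    obtain ⟨w, hw1, hw⟩ := exists_norm_eq_one_of_finite_functionals hZ G
    refine ⟨w, ?_⟩
    simp only [Finset.coe_image, Set.sInter_image, Set.mem_iInter]
    exact fun f hf => ⟨hw1, hw f hf⟩)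
  exact ⟨V, fun f => Filter.mem_of_superset (hV ⟨f, rfl⟩) fun w hw => hw.2,
    Filter.mem_of_superset (hV ⟨0, rfl⟩) fun w hw => hw.1⟩

theorem shiftNorm_add_shiftNorm_neg (hV : ∀ᶠ w in (V : Filter Z), ‖w‖ ≤ C)
    (e : Z) : 2 * shiftNorm V 0 ≤ shiftNorm V e + shiftNorm V (-e) := by
  refine le_of_tendsto_of_tendsto ((tendsto_shiftNorm hV 0).const_mul 2)
    ((tendsto_shiftNorm hV e).add (tendsto_shiftNorm hV (-e))) (Eventually.of_forall fun w => ?_)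
  have h := norm_add_le (e + w) (-e + w)
  have h2 : e + w + (-e + w) = (2 : ℝ) • (0 + w) := by rw [two_smul]; abel
  rwa [h2, norm_smul, Real.norm_of_nonneg zero_le_two] at h

theorem IsNullUltrafilter.sub (hV : IsNullUltrafilter V)
    (hV' : IsNullUltrafilter V') : IsNullUltrafilter (subUltrafilter V V') := fun f => by
  rw [eventually_subUltrafilter]
  filter_upwards [hV f] with w hw
  filter_upwards [hV' f] with y hy
  simp [hw, hy]

/-- Dropping the outer variable of an iterated limit does not increase it, when that variable
runs along a null ultrafilter. -/
theorem shiftNorm_neg_le_shiftNorm_sub (hV : ∀ᶠ w in (V : Filter Z), ‖w‖ ≤ C)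
    (hV' : ∀ᶠ w in (V' : Filter Z), ‖w‖ ≤ C')
    (hnull : IsNullUltrafilter V) (z : Z) :
    shiftNorm V' (-z) ≤ shiftNorm (subUltrafilter V V') z := by
  choose g hg1 hg using fun y : Z => exists_dual_vector'' ℝ (-z + y)
  obtain ⟨f, -, hf⟩ := (WeakDual.isCompact_closedBall (𝕜 := ℝ) (E := Z) 0 1).ultrafilter_le_nhds
    (V'.map fun y => StrongDual.toWeakDual (g y)) (by
      rw [Filter.le_principal_iff]
      show ∀ᶠ y in (V' : Filter Z), StrongDual.toWeakDual (g y) ∈ _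
      refine Filter.Eventually.of_forall fun y => ?_
      simpa using hg1 y)
  have hlim : ∀ w : Z, Tendsto (fun y => g y w) V' (𝓝 (f w)) := fun w =>
    ((WeakDual.eval_continuous w).tendsto f).comp (show Tendsto _ (V' : Filter Z) _ from hf)
  refine le_of_forall_lt fun a ha => ?_
  obtain ⟨b, hab, hb⟩ := exists_between ha
  obtain ⟨c, hbc, hc⟩ := exists_between hb
  refine hab.trans_le (ge_of_tendsto
    (tendsto_shiftNorm (eventually_norm_le_subUltrafilter hV hV') z) ?_)
  rw [eventually_subUltrafilter]
  filter_upwards [hnull (WeakDual.toStrongDual f)] with w hw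
  have hw : f w = 0 := hw
  have h1 := hlim w
  rw [hw] at h1
  filter_upwards [h1.eventually_lt_const (sub_pos.2 hbc),
    (tendsto_shiftNorm hV' (-z)).eventually_const_lt hc] with y hy1 hy2
  have h3 : -(g y) (z + (w - y)) ≤ ‖z + (w - y)‖ := by
    refine (neg_le_abs _).trans (((g y).le_opNorm (z + (w - y))).trans ?_)
    exact mul_le_of_le_one_left (norm_nonneg _) (hg1 y)
  have h4 : (g y) (-z + y) = ‖-z + y‖ := hg y
  have h5 : -(g y) (z + (w - y)) = (g y) (-z + y) - g y w := by simp; ring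
  linarith

theorem IsNullUltrafilter.alt (hV : IsNullUltrafilter V) (n : ℕ) :
    IsNullUltrafilter (altUltrafilter V n) := by
  induction n with
  | zero => exact fun f => (Filter.eventually_pure (a := (0 : Z))).2 (by simp)
  | succ n ih => exact hV.sub ih

theorem shiftNorm_alt_le_succ (hV : ∀ᶠ w in (V : Filter Z), ‖w‖ ≤ 1)
    (hnull : IsNullUltrafilter V) (n : ℕ) (z : Z) :
    shiftNorm (altUltrafilter V n) z ≤ shiftNorm (altUltrafilter V (n + 1)) z := by
  induction n generalizing z with
  | zero =>
    have := shiftNorm_neg_le_shiftNorm_sub hV (altUltrafilter_norm_le hV 0) hnull z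
    rwa [shiftNorm_alt_zero, norm_neg, ← shiftNorm_alt_zero (V := V)] at this
  | succ n ih =>
    refine le_of_forall_lt fun a ha => ?_
    obtain ⟨b, hab, hb⟩ := exists_between ha
    obtain ⟨c, hbc, hc⟩ := exists_between hb
    refine hab.trans_le (ge_of_tendsto (tendsto_shiftNorm (altUltrafilter_norm_le hV (n + 2)) z) ?_)
    refine eventually_subUltrafilter.2 ?_
    have h := eventually_subUltrafilter.1
      ((tendsto_shiftNorm (altUltrafilter_norm_le hV (n + 1)) z).eventually_const_lt hc)
    filter_upwards [h] with w hw
    have key : ∀ y : Z, ‖z + (w - y)‖ = ‖-(z + w) + y‖ := fun y => by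
      rw [← norm_neg]; congr 1; abel
    simp only [key] at hw ⊢
    have h1 : c ≤ shiftNorm (altUltrafilter V n) (-(z + w)) :=
      ge_of_tendsto (tendsto_shiftNorm (altUltrafilter_norm_le hV n) _) (hw.mono fun _ h => h.le)
    have h2 := hbc.trans_le (h1.trans (ih _))
    exact ((tendsto_shiftNorm (altUltrafilter_norm_le hV (n + 1)) _).eventually_const_lt h2).mono
      fun _ h => h.le

theorem shiftNorm_alt_zero_le_succ (hV : ∀ᶠ w in (V : Filter Z), ‖w‖ ≤ 1)
    (hnull : IsNullUltrafilter V) (n : ℕ) (e : Z) :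
    shiftNorm (altUltrafilter V n) 0 ≤ shiftNorm (altUltrafilter V (n + 1)) e := by
  have h1 := shiftNorm_alt_le_succ hV hnull n e
  have h2 : _ ≤ shiftNorm (altUltrafilter V (n + 1)) e :=
    shiftNorm_neg_le_shiftNorm_sub hV (altUltrafilter_norm_le hV n) hnull e
  linarith [shiftNorm_add_shiftNorm_neg (altUltrafilter_norm_le hV n) e]

/-- There is a null ultrafilter on the unit ball that is almost norm-orthogonal to every vector. -/
theorem exists_isNullUltrafilter_orthogonal (hZ : ¬ FiniteDimensional ℝ Z) {η : ℝ} (hη : 0 < η)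
    (hη1 : η < 1) :
    ∃ V : Ultrafilter Z, IsNullUltrafilter V ∧ (∀ᶠ w in (V : Filter Z), ‖w‖ ≤ 1) ∧
      ∀ e : Z, ∀ᶠ w in (V : Filter Z), 1 - η ≤ ‖e + w‖ := by
  obtain ⟨V, hnull, hV1⟩ := exists_isNullUltrafilter_norm_eq_one hZ
  have hV : ∀ᶠ w in (V : Filter Z), ‖w‖ ≤ 1 := hV1.mono fun _ h => h.le
  set T : ℕ → ℝ := fun n => shiftNorm (altUltrafilter V (n + 1)) 0 with hTdef
  have hT0 : 1 ≤ T 0 := by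
    refine ge_of_tendsto (tendsto_shiftNorm (altUltrafilter_norm_le hV 1) 0) ?_
    refine eventually_subUltrafilter.2 ?_
    filter_upwards [hV1] with w hw
    refine (Filter.eventually_pure (a := (0 : Z))).2 ?_
    simp [hw]
  obtain ⟨n, hn⟩ := exists_mul_succ_lt_of_le_succ_add_one hT0
    (fun n => shiftNorm_zero_sub_le hV (altUltrafilter_norm_le hV (n + 1)))
    (sub_pos.2 hη1) (sub_lt_self 1 hη)
  have hTpos : 0 < T (n + 1) := by
    have hmono : Monotone T := monotone_nat_of_le_succ fun n =>
      shiftNorm_alt_le_succ hV hnull (n + 1) 0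
    linarith [hmono (Nat.zero_le (n + 1))]
  obtain ⟨s, hs1, hs2⟩ : ∃ s, T (n + 1) < s ∧ (1 - η) * s < T n := by
    have : T (n + 1) < T n / (1 - η) := by
      rw [lt_div_iff₀ (sub_pos.2 hη1)]; linarith
    obtain ⟨s, h1, h2⟩ := exists_between this
    rw [lt_div_iff₀ (sub_pos.2 hη1)] at h2
    exact ⟨s, h1, by linarith⟩
  have hs : 0 < s := hTpos.trans hs1
  have hW := altUltrafilter_norm_le hV (n + 2)
  refine ⟨(altUltrafilter V (n + 2)).map fun w => s⁻¹ • w, fun f => ?_, ?_, fun e => ?_⟩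
  · refine Filter.eventually_map.2 ?_
    filter_upwards [hnull.alt (n + 2) f] with w hw
    simp [hw]
  · refine Filter.eventually_map.2 ?_
    filter_upwards [(tendsto_shiftNorm hW 0).eventually_lt_const hs1] with w hw
    rw [zero_add] at hw
    rw [norm_smul, norm_inv, Real.norm_of_nonneg hs.le, inv_mul_le_iff₀ hs]
    linarith
  · refine Filter.eventually_map.2 ?_
    have h := shiftNorm_alt_zero_le_succ hV hnull (n + 1) (s • e)
    filter_upwards [(tendsto_shiftNorm hW (s • e)).eventually_const_lt (hs2.trans_le h)] with w hw
    have : e + s⁻¹ • w = s⁻¹ • (s • e + w) := by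
      rw [smul_add, smul_smul, inv_mul_cancel₀ hs.ne', one_smul]
    rw [this, norm_smul, norm_inv, Real.norm_of_nonneg hs.le, le_inv_mul_iff₀ hs]
    linarith

end NullUltrafilter

section AlmostOrthogonal

variable {Z : Type*} [NormedAddCommGroup Z] [NormedSpace ℝ Z]

/-- A finite-dimensional subspace is almost normed by finitely many functionals. -/
theorem exists_finset_almost_norming (F : Submodule ℝ Z) [FiniteDimensional ℝ F] {r : ℝ}
    (hr : r < 1) : ∃ H : Finset (Z →L[ℝ] ℝ), (∀ g ∈ H, ‖g‖ ≤ 1) ∧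
      ∀ e ∈ F, ∃ g ∈ H, r * ‖e‖ ≤ g e := by
  classical
  choose g hg1 hg using fun y : Z => exists_dual_vector'' ℝ y
  have hK : IsCompact ((↑) '' Metric.closedBall (0 : F) 1 : Set Z) :=
    (isCompact_closedBall (0 : F) 1).image continuous_subtype_val
  obtain ⟨t, -, ht, hcov⟩ := hK.finite_cover_balls (half_pos (sub_pos.2 hr))
  refine ⟨ht.toFinset.image g, ?_, fun e he => ?_⟩
  · simp only [Finset.mem_image]
    rintro _ ⟨y, -, rfl⟩
    exact hg1 y
  · obtain ⟨u, hu, hu1, heu⟩ : ∃ u ∈ F, ‖u‖ ≤ 1 ∧ e = ‖e‖ • u := by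
      refine ⟨‖e‖⁻¹ • e, F.smul_mem _ he, ?_, ?_⟩
      · rw [norm_smul, norm_inv, norm_norm]
        exact inv_mul_le_one
      · by_cases h : e = 0
        · simp [h]
        · rw [smul_smul, mul_inv_cancel₀ (norm_ne_zero_iff.2 h), one_smul]
    have hmem : u ∈ ((↑) '' Metric.closedBall (0 : F) 1 : Set Z) :=
      ⟨⟨u, hu⟩, by simpa using hu1, rfl⟩
    obtain ⟨y, hy, hyu⟩ := Set.mem_iUnion₂.1 (hcov hmem)
    refine ⟨g y, Finset.mem_image_of_mem _ (ht.mem_toFinset.2 hy), ?_⟩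
    rw [Metric.mem_ball, dist_eq_norm] at hyu
    have h1 : |g y (u - y)| ≤ ‖u - y‖ := (g y).le_of_opNorm_le (hg1 y) _ |>.trans_eq (one_mul _)
    have h2 : g y y = ‖y‖ := hg y
    rw [map_sub] at h1
    have h3 : ‖u‖ - (1 - r) ≤ g y u := by
      linarith [(abs_le.1 h1).1, norm_sub_norm_le u y]
    have h4 : ‖e‖ = ‖e‖ * ‖u‖ := by
      conv_lhs => rw [heu, norm_smul, norm_norm]
    have h5 : g y e = ‖e‖ * g y u := by
      conv_lhs => rw [heu, map_smul, smul_eq_mul]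
    rw [h5]
    nlinarith [mul_le_mul_of_nonneg_left h3 (norm_nonneg e)]

/-- Finite-dimensional subspaces admit almost norm-orthogonal vectors. -/
theorem exists_almost_orthogonal (hZ : ¬ FiniteDimensional ℝ Z) (F : Submodule ℝ Z)
    [FiniteDimensional ℝ F] (G : Finset (Z →L[ℝ] ℝ)) {r : ℝ} (hr0 : 0 < r) (hr : r < 1) :
    ∃ w : Z, ‖w‖ ≤ 1 ∧ (∀ g ∈ G, g w = 0) ∧
      ∀ e ∈ F, ∀ a : ℝ, r * |a| ≤ ‖e + a • w‖ ∧ r * ‖e‖ ≤ ‖e + a • w‖ := by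
  obtain ⟨V, hnull, hV1, hV⟩ := exists_isNullUltrafilter_orthogonal hZ
    (half_pos (sub_pos.2 hr)) (by linarith)
  obtain ⟨H, hH1, hH⟩ := exists_finset_almost_norming F hr
  have hK : IsCompact ((↑) '' Metric.closedBall (0 : F) 2 : Set Z) :=
    (isCompact_closedBall (0 : F) 2).image continuous_subtype_val
  obtain ⟨t, -, ht, hcov⟩ := hK.finite_cover_balls (half_pos (sub_pos.2 hr))
  have hG : ∀ᶠ w in (V : Filter Z), ∀ g ∈ G, g w = 0 :=
    (Filter.eventually_all_finset G).2 fun g _ => hnull g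
  have hH0 : ∀ᶠ w in (V : Filter Z), ∀ g ∈ H, g w = 0 :=
    (Filter.eventually_all_finset H).2 fun g _ => hnull g
  have htw : ∀ᶠ w in (V : Filter Z), ∀ e ∈ t, 1 - (1 - r) / 2 ≤ ‖e + w‖ :=
    (Filter.eventually_all_finite ht).2 fun e _ => hV e
  obtain ⟨w, hw1, hwG, hwH, hwt⟩ := (hV1.and (hG.and (hH0.and htw))).exists
  refine ⟨w, hw1, hwG, fun e he a => ⟨?_, ?_⟩⟩
  · have key : ∀ e ∈ F, r ≤ ‖e + w‖ := fun e he => by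
      rcases le_or_gt ‖e‖ 2 with h | h
      · have hmem : e ∈ ((↑) '' Metric.closedBall (0 : F) 2 : Set Z) :=
          ⟨⟨e, he⟩, by simpa using h, rfl⟩
        obtain ⟨y, hy, hyu⟩ := Set.mem_iUnion₂.1 (hcov hmem)
        rw [Metric.mem_ball, dist_comm, dist_eq_norm] at hyu
        have := norm_sub_norm_le (y + w) (e + w)
        rw [add_sub_add_right_eq_sub] at this
        linarith [hwt y hy]
      · have := norm_sub_le (e + w) w
        rw [add_sub_cancel_right] at this
        linarith
    rcases eq_or_ne a 0 with rfl | ha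
    · simp
    · have h := key (a⁻¹ • e) (F.smul_mem _ he)
      have h2 : e + a • w = a • (a⁻¹ • e + w) := by
        rw [smul_add, smul_smul, mul_inv_cancel₀ ha, one_smul]
      rw [h2, norm_smul, Real.norm_eq_abs, mul_comm]
      exact mul_le_mul_of_nonneg_left h (abs_nonneg a)
  · obtain ⟨g, hg, hge⟩ := hH e he
    have h1 : |g (e + a • w)| ≤ ‖e + a • w‖ :=
      (g.le_of_opNorm_le (hH1 g hg) _).trans_eq (one_mul _)
    have h2 : g (e + a • w) = g e := by simp [hwH g hg]
    rw [h2] at h1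
    exact hge.trans ((le_abs_self _).trans h1)

end AlmostOrthogonal

section AlmostOrthogonalSequence

variable {Z : Type*} [NormedAddCommGroup Z] [NormedSpace ℝ Z]

/-- A sequence in the unit ball that is almost norm-orthogonal relative to a finite-dimensional
subspace. -/
theorem exists_almost_orthogonal_seq (hZ : ¬ FiniteDimensional ℝ Z) (E : Submodule ℝ Z)
    [FiniteDimensional ℝ E] (G : Finset (Z →L[ℝ] ℝ)) {r : ℝ} (hr0 : 0 < r) (hr : r < 1) :
    ∃ v : ℕ → Z, (∀ k, ‖v k‖ ≤ 1) ∧ (∀ k, ∀ g ∈ G, g (v k) = 0) ∧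
      ∀ e ∈ E, ∀ (b : ℕ → ℝ) (n : ℕ),
        r * ‖e‖ ≤ ‖e + ∑ i ∈ Finset.range n, b i • v i‖ ∧
        ∀ k < n, r * |b k| ≤ ‖e + ∑ i ∈ Finset.range n, b i • v i‖ := by
  let q : ℕ → ℝ := fun n => r + (1 - r) * (1 / 2) ^ n
  have hqr : ∀ n, r < q n := fun n =>
    lt_add_of_pos_right _ (mul_pos (sub_pos.2 hr) (by positivity))
  have hq0 : ∀ n, 0 < q n := fun n => hr0.trans (hqr n)
  have hq1 : ∀ n, q n ≤ 1 := fun n => by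
    have : ((1 : ℝ) / 2) ^ n ≤ 1 := pow_le_one₀ (by norm_num) (by norm_num)
    simp only [q]
    nlinarith
  have hqs : ∀ n, q (n + 1) < q n := fun n => by
    have : (0 : ℝ) < (1 / 2) ^ n := by positivity
    simp only [q, pow_succ]
    nlinarith [mul_pos (sub_pos.2 hr) this]
  choose w hw1 hwG hw using fun (n : ℕ) (F : {F : Submodule ℝ Z // FiniteDimensional ℝ F}) =>
    haveI := F.2
    exists_almost_orthogonal hZ F.1 G (div_pos (hq0 (n + 1)) (hq0 n))
      ((div_lt_one (hq0 n)).2 (hqs n))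
  let F : ℕ → {F : Submodule ℝ Z // FiniteDimensional ℝ F} := fun n =>
    Nat.rec ⟨E, inferInstance⟩ (fun n F => ⟨F.1 ⊔ Submodule.span ℝ {w n F}, by
      have := F.2
      infer_instance⟩) n
  have hF : ∀ n, (F (n + 1)).1 = (F n).1 ⊔ Submodule.span ℝ {w n (F n)} := fun n => rfl
  refine ⟨fun n => w n (F n), fun n => hw1 _ _, fun n => hwG _ _, fun e he b n => ?_⟩
  have hmem : ∀ n, e + ∑ i ∈ Finset.range n, b i • w i (F i) ∈ (F n).1 := fun n => by
    induction n with
    | zero => simpa using show e ∈ (F 0).1 from he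
    | succ n ih =>
      rw [Finset.sum_range_succ, ← add_assoc, hF]
      exact Submodule.add_mem_sup ih (Submodule.smul_mem _ _ (Submodule.mem_span_singleton_self _))
  suffices h : q n * ‖e‖ ≤ ‖e + ∑ i ∈ Finset.range n, b i • w i (F i)‖ ∧
      ∀ k < n, q n * |b k| ≤ ‖e + ∑ i ∈ Finset.range n, b i • w i (F i)‖ from
    ⟨(mul_le_mul_of_nonneg_right (hqr n).le (norm_nonneg _)).trans h.1, fun k hk =>
      (mul_le_mul_of_nonneg_right (hqr n).le (abs_nonneg _)).trans (h.2 k hk)⟩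
  induction n with
  | zero => simpa using mul_le_mul_of_nonneg_right (hq1 0) (norm_nonneg e)
  | succ n ih =>
    obtain ⟨h1, h2⟩ := hw n (F n) _ (hmem n) (b n)
    rw [Finset.sum_range_succ, ← add_assoc]
    set u := e + ∑ i ∈ Finset.range n, b i • w i (F i)
    have key : ∀ x, q n * x ≤ ‖u‖ → q (n + 1) * x ≤ ‖u + b n • w n (F n)‖ := fun x hx => by
      refine le_trans ?_ h2
      rw [div_mul_eq_mul_div, le_div_iff₀ (hq0 n), mul_assoc, mul_comm x]
      exact mul_le_mul_of_nonneg_left hx (hq0 _).le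
    refine ⟨key _ ih.1, fun k hk => ?_⟩
    rcases (Nat.lt_succ_iff_lt_or_eq.1 hk) with hk | rfl
    · exact key _ (ih.2 k hk)
    · refine le_trans (mul_le_mul_of_nonneg_right ?_ (abs_nonneg _)) h1
      rw [le_div_iff₀ (hq0 k)]
      exact mul_le_of_le_one_right (hq0 _).le (hq1 k)

end AlmostOrthogonalSequence

section JamesDistortion

open Filter Topology

/-- The `ℓ₁` norm of a finitely supported sequence. -/
noncomputable def finsuppL1 (c : ℕ →₀ ℝ) : ℝ := c.sum fun _ a => |a|

theorem finsuppL1_nonneg (c : ℕ →₀ ℝ) : 0 ≤ finsuppL1 c :=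
  Finset.sum_nonneg fun _ _ => abs_nonneg _

theorem finsuppL1_smul (a : ℝ) (c : ℕ →₀ ℝ) : finsuppL1 (a • c) = |a| * finsuppL1 c := by
  rw [finsuppL1, Finsupp.sum_smul_index (by simp), finsuppL1, Finsupp.mul_sum]
  simp only [abs_mul]

theorem finsuppL1_add {c d : ℕ →₀ ℝ} (h : Disjoint c.support d.support) :
    finsuppL1 (c + d) = finsuppL1 c + finsuppL1 d :=
  Finsupp.sum_add_index_of_disjoint h _

theorem finsuppL1_single (n : ℕ) (a : ℝ) : finsuppL1 (Finsupp.single n a) = |a| := by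
  simp [finsuppL1]

theorem disjoint_support_of_lt {c d : ℕ →₀ ℝ} {n : ℕ} (hc : ∀ i ∈ c.support, i < n)
    (hd : ∀ i ∈ d.support, n ≤ i) : Disjoint c.support d.support :=
  Finset.disjoint_left.2 fun i hi hi' => absurd (hc i hi) (not_lt.2 (hd i hi'))

variable {Z : Type*} [NormedAddCommGroup Z] [NormedSpace ℝ Z]

theorem norm_linearCombination_le {v : ℕ → Z} (hv : ∀ k, ‖v k‖ ≤ 1) (c : ℕ →₀ ℝ) :
    ‖Finsupp.linearCombination ℝ v c‖ ≤ finsuppL1 c := by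
  rw [Finsupp.linearCombination_apply]
  refine (norm_sum_le _ _).trans (Finset.sum_le_sum fun i _ => ?_)
  rw [norm_smul, Real.norm_eq_abs]
  exact mul_le_of_le_one_right (abs_nonneg _) (hv i)

/-- Successive blocks of a fixed `ℓ₁` norm span `ℓ₁` isometrically, up to scaling. -/
theorem exists_successive_blocks {D : ℕ → ℕ →₀ ℝ} (n₀ : ℕ) (hD : ∀ n, ∀ i ∈ (D n).support, n ≤ i)
    {s : ℝ} (hs : ∀ n, finsuppL1 (D n) = s) :
    ∃ N : ℕ → ℕ, ∀ (b : ℕ → ℝ) (m : ℕ),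
      (∀ i ∈ (∑ k ∈ Finset.range m, b k • D (N k)).support, n₀ ≤ i) ∧
      finsuppL1 (∑ k ∈ Finset.range m, b k • D (N k)) = s * ∑ k ∈ Finset.range m, |b k| := by
  let N : ℕ → ℕ := fun k => Nat.rec n₀ (fun _ n => max n ((D n).support.sup id + 1)) k
  have hN : ∀ k, N (k + 1) = max (N k) ((D (N k)).support.sup id + 1) := fun k => rfl
  have hN0 : ∀ k, n₀ ≤ N k := fun k => by
    induction k with
    | zero => exact le_rfl
    | succ k ih => exact ih.trans ((hN k).symm ▸ le_max_left _ _)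
  refine ⟨N, fun b m => ?_⟩
  suffices h : (∀ i ∈ (∑ k ∈ Finset.range m, b k • D (N k)).support, i < N m) ∧
      (∀ i ∈ (∑ k ∈ Finset.range m, b k • D (N k)).support, n₀ ≤ i) ∧
      finsuppL1 (∑ k ∈ Finset.range m, b k • D (N k)) = s * ∑ k ∈ Finset.range m, |b k| from h.2
  induction m with
  | zero => simp [finsuppL1]
  | succ m ih =>
    obtain ⟨h1, h2, h3⟩ := ih
    have hb : ∀ i ∈ (b m • D (N m)).support, i ∈ (D (N m)).support := fun i hi =>
      Finsupp.support_smul hi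
    have hdis := disjoint_support_of_lt h1 fun i hi => hD _ i (hb i hi)
    rw [Finset.sum_range_succ, Finset.sum_range_succ, finsuppL1_add hdis, h3, finsuppL1_smul, hs]
    refine ⟨fun i hi => ?_, fun i hi => ?_, by ring⟩
    · rw [hN]
      rcases Finset.mem_union.1 (Finsupp.support_add hi) with hi | hi
      · exact lt_max_of_lt_left (h1 i hi)
      · exact lt_max_of_lt_right (Nat.lt_succ_of_le (Finset.le_sup (f := id) (hb i hi)))
    · rcases Finset.mem_union.1 (Finsupp.support_add hi) with hi | hi
      · exact h2 i hi
      · exact (hN0 m).trans (hD _ i (hb i hi))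

/-- The James distortion argument for `ℓ₁`, relative to a finite-dimensional subspace. -/
theorem exists_almost_isometric_l1_blocks (E : Submodule ℝ Z) [FiniteDimensional ℝ E] {v : ℕ → Z}
    (hv : ∀ k, ‖v k‖ ≤ 1) {μ : ℝ} (hμ : 0 < μ) {n₀ : ℕ}
    (h : ∀ c : ℕ →₀ ℝ, (∀ i ∈ c.support, n₀ ≤ i) → ∀ e ∈ E,
      μ * finsuppL1 c ≤ ‖e + Finsupp.linearCombination ℝ v c‖) {r : ℝ} (hr0 : 0 < r) (hr : r < 1) :
    ∃ d : ℕ → ℕ →₀ ℝ, (∀ k, ‖Finsupp.linearCombination ℝ v (d k)‖ ≤ 1) ∧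
      ∀ e ∈ E, ∀ (b : ℕ → ℝ) (m : ℕ), r * ∑ k ∈ Finset.range m, |b k| ≤
        ‖e + ∑ k ∈ Finset.range m, b k • Finsupp.linearCombination ℝ v (d k)‖ := by
  set T := Finsupp.linearCombination ℝ v with hT
  let P : ℝ → Prop := fun μ => ∃ n₀ : ℕ, ∀ c : ℕ →₀ ℝ, (∀ i ∈ c.support, n₀ ≤ i) → ∀ e ∈ E,
    μ * finsuppL1 c ≤ ‖e + T c‖
  set t := (1 - r) / 2 with ht
  have ht0 : 0 < t := half_pos (sub_pos.2 hr)
  have ht1 : 0 < 1 - t := by linarith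
  obtain ⟨lam, hlam0, hlam1, hlam2⟩ : ∃ lam : ℝ, 0 < lam ∧ P ((1 - t) * lam) ∧ ¬ P lam := by
    have hP0 : P (μ * ((1 - t)⁻¹) ^ 0) := ⟨n₀, by simpa using h⟩
    have hP1 : ∃ j, ¬ P (μ * ((1 - t)⁻¹) ^ j) := by
      obtain ⟨j, hj⟩ := pow_unbounded_of_one_lt (1 / μ) (one_lt_inv₀ ht1 |>.2 (by linarith))
      refine ⟨j, fun ⟨n, hn⟩ => ?_⟩
      have := hn (Finsupp.single n 1) (fun i hi => by
        exact (Finset.mem_singleton.1 (Finsupp.support_single_subset hi)).ge) 0 E.zero_mem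
      rw [finsuppL1_single, zero_add, hT, Finsupp.linearCombination_single, one_smul] at this
      rw [div_lt_iff₀ hμ] at hj
      rw [abs_one, mul_one] at this
      linarith [hv n]
    classical
    have hj := Nat.find_spec hP1
    obtain ⟨j, hj'⟩ : ∃ j, Nat.find hP1 = j + 1 :=
      Nat.exists_eq_succ_of_ne_zero fun h0 => by rw [h0] at hj; exact hj hP0
    have hj2 := Nat.find_min hP1 (m := j) (by omega)
    rw [hj'] at hj
    refine ⟨_, by positivity, ?_, hj⟩
    convert not_not.1 hj2 using 1
    rw [pow_succ]
    field_simp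
  obtain ⟨n₁, hn₁⟩ := hlam1
  have hlow : ∀ n : ℕ, ∃ c : ℕ →₀ ℝ, ∃ e : E, (∀ i ∈ c.support, n ≤ i) ∧ finsuppL1 c = 1 ∧
      ‖(e : Z) + T c‖ < lam := fun n => by
    simp only [P, not_exists, not_forall] at hlam2
    obtain ⟨c, hc, e, he, hce⟩ := hlam2 n
    rw [not_le] at hce
    have hpos : 0 < finsuppL1 c := by
      rcases (finsuppL1_nonneg c).eq_or_lt with h0 | h0
      · rw [← h0, mul_zero] at hce
        exact absurd hce (norm_nonneg _).not_gt
      · exact h0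
    refine ⟨(finsuppL1 c)⁻¹ • c, ⟨(finsuppL1 c)⁻¹ • e, E.smul_mem _ he⟩,
      fun i hi => hc i (Finsupp.support_smul hi), ?_, ?_⟩
    · rw [finsuppL1_smul, abs_of_pos (inv_pos.2 hpos), inv_mul_cancel₀ hpos.ne']
    · rw [map_smul, ← smul_add, norm_smul, norm_inv, Real.norm_of_nonneg hpos.le,
        inv_mul_lt_iff₀ hpos]
      linarith
  choose c e hc hc1 hce using hlow
  obtain ⟨e₀, -, φ, hφ, hlim⟩ := tendsto_subseq_of_bounded (x := e)
    (Metric.isBounded_closedBall (x := (0 : E)) (r := lam + 1)) (fun n => by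
      rw [mem_closedBall_zero_iff]
      have h1 := norm_sub_le ((e n : Z) + T (c n)) (T (c n))
      have h2 := norm_linearCombination_le hv (c n)
      rw [add_sub_cancel_right] at h1
      have h3 : ‖e n‖ = ‖(e n : Z)‖ := rfl
      rw [hc1] at h2
      linarith [hce n])
  have hunif : ∀ n : ℕ, ∃ c : ℕ →₀ ℝ, (∀ i ∈ c.support, n ≤ i) ∧ finsuppL1 c = 1 ∧
      ‖(e₀ : Z) + T c‖ ≤ (1 + t) * lam := fun n => by
    obtain ⟨M, hM⟩ := Metric.tendsto_atTop.1 hlim (t * lam) (mul_pos ht0 hlam0)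
    have hd := hM (max M n) (le_max_left _ _)
    set j := φ (max M n) with hj
    have hjn : n ≤ j := (le_max_right M n).trans hφ.le_apply
    refine ⟨c j, fun i hi => hjn.trans (hc j i hi), hc1 j, ?_⟩
    have h1 := norm_add_le ((e j : Z) + T (c j)) ((e₀ : Z) - e j)
    have h2 : (e j : Z) + T (c j) + (e₀ - e j) = e₀ + T (c j) := by abel
    rw [dist_comm, dist_eq_norm] at hd
    have h3 : ‖(e₀ : Z) - e j‖ < t * lam := hd
    rw [h2] at h1
    linarith [hce j]
  have hpair : ∀ n : ℕ, ∃ d : ℕ →₀ ℝ, (∀ i ∈ d.support, n ≤ i) ∧ finsuppL1 d = 2 ∧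
      ‖T d‖ ≤ 2 * ((1 + t) * lam) := fun n => by
    obtain ⟨c₁, h1, h2, h3⟩ := hunif n
    obtain ⟨c₂, h4, h5, h6⟩ := hunif (max n (c₁.support.sup id + 1))
    refine ⟨c₁ + (-1 : ℝ) • c₂, fun i hi => ?_, ?_, ?_⟩
    · rcases Finset.mem_union.1 (Finsupp.support_add hi) with hi | hi
      · exact h1 i hi
      · exact (le_max_left _ _).trans (h4 i (Finsupp.support_smul hi))
    · rw [finsuppL1_add, finsuppL1_smul, h2, h5]
      · norm_num
      · exact disjoint_support_of_lt
          (fun i hi => lt_max_of_lt_right (Nat.lt_succ_of_le (Finset.le_sup (f := id) hi)))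
          fun i hi => h4 i (Finsupp.support_smul hi)
    · have h7 := norm_sub_le ((e₀ : Z) + T c₁) (e₀ + T c₂)
      have h8 : (e₀ : Z) + T c₁ - (e₀ + T c₂) = T (c₁ + (-1 : ℝ) • c₂) := by
        rw [map_add, map_smul, neg_one_smul]; abel
      rw [h8] at h7
      linarith
  choose D hD1 hD2 hD3 using hpair
  obtain ⟨N, hN⟩ := exists_successive_blocks n₁ hD1 hD2
  have hs : 0 < 2 * ((1 + t) * lam) := by positivity
  set s := 2 * ((1 + t) * lam) with hsdef
  refine ⟨fun k => s⁻¹ • D (N k), fun k => ?_, fun e he b m => ?_⟩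
  · rw [map_smul, norm_smul, norm_inv, Real.norm_of_nonneg hs.le, inv_mul_le_iff₀ hs, mul_one]
    exact hD3 _
  · obtain ⟨h1, h2⟩ := hN (fun k => b k) m
    have h3 := hn₁ _ h1 (s • e) (E.smul_mem _ he)
    rw [h2] at h3
    have h4 : e + ∑ k ∈ Finset.range m, b k • T (s⁻¹ • D (N k)) =
        s⁻¹ • (s • e + T (∑ k ∈ Finset.range m, b k • D (N k))) := by
      rw [smul_add, smul_smul, inv_mul_cancel₀ hs.ne', one_smul, map_sum, Finset.smul_sum]
      refine congrArg _ (Finset.sum_congr rfl fun k _ => ?_)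
      rw [map_smul, map_smul, smul_comm]
    rw [h4, norm_smul, norm_inv, Real.norm_of_nonneg hs.le, le_inv_mul_iff₀ hs]
    refine le_trans ?_ h3
    have h5 : 0 ≤ ∑ k ∈ Finset.range m, |b k| := Finset.sum_nonneg fun _ _ => abs_nonneg _
    have h6 : r * (1 + t) ≤ 1 - t := by
      rw [ht]; nlinarith
    have h7 : 0 ≤ lam * ∑ k ∈ Finset.range m, |b k| := mul_nonneg hlam0.le h5
    rw [hsdef]
    nlinarith [mul_le_mul_of_nonneg_right h6 h7]

end JamesDistortion

section BlockLemma

/-- Sylvester's sign matrices. -/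
theorem exists_sign_matrix (k : ℕ) : ∃ h : Matrix (Fin (2 ^ k)) (Fin (2 ^ k)) ℝ,
    (∀ i j, |h i j| = 1) ∧
    (∀ i i', ∑ j, h i j * h i' j = if i = i' then 2 ^ k else 0) ∧
    ∀ j j', ∑ i, h i j * h i j' = if j = j' then 2 ^ k else 0 := by
  suffices H : ∃ h : Matrix (Fin (2 ^ k)) (Fin (2 ^ k)) ℝ, h.IsHadamard by
    obtain ⟨h, hh⟩ := H
    refine ⟨h, fun i j => ?_, fun i i' => ?_, fun j j' => ?_⟩
    · have := (Unitary.mem_iff.1 (hh.apply_mem i j)).1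
      rw [star_trivial] at this
      exact (abs_eq zero_le_one).2 (mul_self_eq_one_iff.1 this)
    · have := congrFun (congrFun hh.mul_conjTranspose i) i'
      simpa [Matrix.mul_apply, Matrix.one_apply] using this
    · have := congrFun (congrFun hh.conjTranspose_mul j) j'
      simpa [Matrix.mul_apply, Matrix.one_apply] using this
  induction k with
  | zero =>
    refine ⟨1, ?_⟩
    constructor <;> simp [Matrix.one_apply, Fin.fin_one_eq_zero, one_mem]
  | succ k ih =>
    obtain ⟨h, hh⟩ := ih
    have h2 : (!![1, 1; 1, -1] : Matrix (Fin 2) (Fin 2) ℝ).IsHadamard := by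
      refine ⟨fun i j => ?_, ?_, ?_⟩
      · rw [Unitary.mem_iff]
        fin_cases i <;> fin_cases j <;> simp
      all_goals
        ext i j
        fin_cases i <;> fin_cases j <;> simp [Matrix.mul_apply] <;> norm_num
    have e : Fin (2 ^ k) × Fin 2 ≃ Fin (2 ^ (k + 1)) :=
      finProdFinEquiv.trans (finCongr (pow_succ 2 k).symm)
    exact ⟨_, (hh.kronecker h2).reindex e e⟩

variable {Z : Type*} [NormedAddCommGroup Z] [NormedSpace ℝ Z]

/-- A finite almost norm-orthogonal system some `ℓ₁`-normalized combination of which is small. -/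
def HasSmallBlock (E : Submodule ℝ Z) (G : Finset (Z →L[ℝ] ℝ)) (r δ : ℝ) : Prop :=
  ∃ (N : ℕ) (y : Fin N → Z) (c : Fin N → ℝ), (∀ j, ‖y j‖ ≤ 1) ∧ (∀ j, ∀ g ∈ G, g (y j) = 0) ∧
    (∀ e ∈ E, ∀ (b : Fin N → ℝ) (j : Fin N), r * |b j| ≤ ‖e + ∑ i, b i • y i‖) ∧
    ∑ j, |c j| = 1 ∧ ‖∑ j, c j • y j‖ ≤ δ

theorem hasSmallBlock_of_l1 {E : Submodule ℝ Z} {G : Finset (Z →L[ℝ] ℝ)} {r δ : ℝ} (hδ : 0 < δ)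
    (hr0 : 0 < r) {z : ℕ → Z} (hz1 : ∀ k, ‖z k‖ ≤ 1) (hzG : ∀ k, ∀ g ∈ G, g (z k) = 0)
    (hz : ∀ e ∈ E, ∀ (b : ℕ → ℝ) (m : ℕ), r * ∑ k ∈ Finset.range m, |b k| ≤
        ‖e + ∑ k ∈ Finset.range m, b k • z k‖) : HasSmallBlock E G r δ := by
  obtain ⟨k, hk⟩ := pow_unbounded_of_one_lt (1 / δ) (one_lt_two)
  obtain ⟨h, h1, hrow, hcol⟩ := exists_sign_matrix k
  set m : ℝ := 2 ^ k with hm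
  have hm0 : 0 < m := by positivity
  let j₀ : Fin (2 ^ k) := ⟨0, by positivity⟩
  have hz' : ∀ e ∈ E, ∀ b : Fin (2 ^ k) → ℝ, r * ∑ j, |b j| ≤ ‖e + ∑ j, b j • z j‖ := by
    intro e he b
    have := hz e he (fun i => if hi : i < 2 ^ k then b ⟨i, hi⟩ else 0) (2 ^ k)
    simpa [Finset.sum_range] using this
  refine ⟨2 ^ k, fun j => m⁻¹ • ∑ w, h j w • z w, fun j => m⁻¹ * h j j₀, fun j => ?_,
    fun j g hg => ?_, fun e he b i => ?_, ?_, ?_⟩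
  · rw [norm_smul, norm_inv, Real.norm_of_nonneg hm0.le, inv_mul_le_iff₀ hm0, mul_one]
    refine (norm_sum_le _ _).trans ((Finset.sum_le_card_nsmul _ _ 1 fun w _ => ?_).trans ?_)
    · rw [norm_smul, Real.norm_eq_abs, h1, one_mul]
      exact hz1 w
    · simp [hm]
  · simp [hzG _ g hg]
  · have h2 : ∑ j, b j • m⁻¹ • ∑ w, h j w • z w = ∑ w, (m⁻¹ * ∑ j, b j * h j w) • z w := by
      simp only [Finset.smul_sum, Finset.mul_sum, Finset.sum_smul, smul_smul]
      rw [Finset.sum_comm]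
      refine Finset.sum_congr rfl fun w _ => Finset.sum_congr rfl fun j _ => ?_
      congr 1; ring
    rw [h2]
    refine le_trans (mul_le_mul_of_nonneg_left ?_ hr0.le) (hz' e he _)
    have h3 : b i = ∑ w, h i w * (m⁻¹ * ∑ j, b j * h j w) := by
      have : ∑ w, h i w * (m⁻¹ * ∑ j, b j * h j w) = ∑ j, m⁻¹ * b j * ∑ w, h i w * h j w := by
        simp only [Finset.mul_sum]
        rw [Finset.sum_comm]
        refine Finset.sum_congr rfl fun w _ => Finset.sum_congr rfl fun j _ => ?_
        ring
      rw [this]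
      simp only [hrow, mul_ite, mul_zero, Finset.sum_ite_eq, Finset.mem_univ, if_true]
      field_simp
    rw [h3]
    refine (Finset.abs_sum_le_sum_abs _ _).trans (Finset.sum_le_sum fun w _ => ?_)
    rw [abs_mul, h1, one_mul]
  · simp only [abs_mul, h1, abs_of_pos (inv_pos.2 hm0), mul_one, Finset.sum_const,
      Finset.card_univ, Fintype.card_fin, nsmul_eq_mul]
    rw [Nat.cast_pow, Nat.cast_ofNat, ← hm, mul_inv_cancel₀ hm0.ne']
  · have h2 : ∑ j, (m⁻¹ * h j j₀) • m⁻¹ • ∑ w, h j w • z w = m⁻¹ • z j₀ := by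
      have : ∑ j, (m⁻¹ * h j j₀) • m⁻¹ • ∑ w, h j w • z w =
          ∑ w, (m⁻¹ * m⁻¹ * ∑ j, h j j₀ * h j w) • z w := by
        simp only [Finset.smul_sum, Finset.mul_sum, Finset.sum_smul, smul_smul]
        rw [Finset.sum_comm]
        refine Finset.sum_congr rfl fun w _ => Finset.sum_congr rfl fun j _ => ?_
        congr 1; ring
      rw [this]
      simp only [hcol, mul_ite, mul_zero, ite_smul, zero_smul, Finset.sum_ite_eq, Finset.mem_univ,
        if_true]
      congr 1; field_simp
    rw [h2, norm_smul, norm_inv, Real.norm_of_nonneg hm0.le, inv_mul_le_iff₀ hm0]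
    rw [div_lt_iff₀ hδ] at hk
    exact (hz1 _).trans hk.le

theorem hasSmallBlock (hZ : ¬ FiniteDimensional ℝ Z) (E : Submodule ℝ Z)
    [FiniteDimensional ℝ E] (G : Finset (Z →L[ℝ] ℝ)) {r δ : ℝ} (hr0 : 0 < r) (hr : r < 1)
    (hδ : 0 < δ) : HasSmallBlock E G r δ := by
  obtain ⟨v, hv1, hvG, hv⟩ := exists_almost_orthogonal_seq hZ E G hr0 hr
  by_cases hμ : ∀ c : ℕ →₀ ℝ, (∀ i ∈ c.support, 0 ≤ i) → ∀ e ∈ E,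
      r * δ / 2 * finsuppL1 c ≤ ‖e + Finsupp.linearCombination ℝ v c‖
  · obtain ⟨d, hd1, hd⟩ := exists_almost_isometric_l1_blocks E hv1 (by positivity) hμ hr0 hr
    refine hasSmallBlock_of_l1 hδ hr0 hd1 (fun k g hg => ?_) hd
    rw [Finsupp.linearCombination_apply, map_finsuppSum]
    exact Finset.sum_eq_zero fun i _ => by simp [hvG i g hg]
  · push Not at hμ
    obtain ⟨c, -, e, he, hce⟩ := hμ
    have hpos : 0 < finsuppL1 c :=
      pos_of_mul_pos_right ((norm_nonneg _).trans_lt hce) (by positivity)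
    set N := c.support.sup id + 1 with hN
    have hsub : c.support ⊆ Finset.range N := fun i hi =>
      Finset.mem_range.2 (Nat.lt_succ_of_le (Finset.le_sup (f := id) hi))
    have hT : Finsupp.linearCombination ℝ v c = ∑ i ∈ Finset.range N, c i • v i :=
      Finsupp.sum_of_support_subset c hsub _ (by simp)
    have hL : finsuppL1 c = ∑ i ∈ Finset.range N, |c i| :=
      Finsupp.sum_of_support_subset c hsub _ (by simp)
    refine ⟨N, fun i => v i, fun i => (finsuppL1 c)⁻¹ * c i, fun j => hv1 j, fun j => hvG j,
      fun e he b j => ?_, ?_, ?_⟩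
    · have := (hv e he (fun i => if hi : i < N then b ⟨i, hi⟩ else 0) N).2 j j.2
      simpa [Finset.sum_range] using this
    · simp only [abs_mul, abs_of_pos (inv_pos.2 hpos)]
      rw [← Finset.mul_sum, ← Finset.sum_range (fun i => |c i|), ← hL, inv_mul_cancel₀ hpos.ne']
    · simp only [mul_smul]
      rw [← Finset.smul_sum, ← Finset.sum_range (fun i => c i • v i), ← hT, norm_smul, norm_inv,
        Real.norm_of_nonneg hpos.le, inv_mul_le_iff₀ hpos]
      have h1 := (hv e he c N).1
      rw [← hT] at h1
      have h2 := norm_sub_le (e + Finsupp.linearCombination ℝ v c) e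
      rw [add_sub_cancel_left] at h2
      have h3 : ‖e‖ ≤ δ / 2 * finsuppL1 c := by
        refine le_of_mul_le_mul_left ?_ hr0
        nlinarith
      nlinarith [mul_pos hδ hpos]

end BlockLemma

section Separation

variable {Z : Type*} [NormedAddCommGroup Z] [NormedSpace ℝ Z]

theorem exists_functional_of_dist_le (M : Submodule ℝ Z) [FiniteDimensional ℝ M] {y : Z} {c : ℝ}
    (hc : 0 < c) (h : ∀ m ∈ M, c ≤ ‖m + y‖) :
    ∃ f : Z →L[ℝ] ℝ, (∀ m ∈ M, f m = 0) ∧ f y = 1 ∧ ‖f‖ ≤ 1 / c := by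
  obtain ⟨g, hg1, hg⟩ := exists_dual_vector'' ℝ (M.mkQ y)
  have hle : c ≤ ‖M.mkQ y‖ := by
    refine le_of_forall_pos_lt_add fun δ hδ => ?_
    obtain ⟨m, hm, hlt⟩ := Submodule.Quotient.norm_mk_lt (M.mkQ y) hδ
    have hmem : m - y ∈ M := (Submodule.Quotient.eq M).1 hm
    have := h _ hmem
    rw [sub_add_cancel] at this
    linarith
  have hpos := hc.trans_le hle
  have hg' : g (M.mkQ y) = ‖M.mkQ y‖ := hg
  refine ⟨‖M.mkQ y‖⁻¹ • g.comp M.mkQL, fun m hm => ?_, ?_, ?_⟩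
  · have : M.mkQL m = 0 := (Submodule.Quotient.mk_eq_zero M).2 hm
    simp [this]
  · have : M.mkQL y = M.mkQ y := rfl
    rw [smul_apply, ContinuousLinearMap.comp_apply, this, hg', smul_eq_mul,
      inv_mul_cancel₀ hpos.ne']
  · have h1 : ‖g.comp M.mkQL‖ ≤ 1 := ContinuousLinearMap.opNorm_le_bound _ zero_le_one fun x => by
      refine (g.le_of_opNorm_le hg1 _).trans ?_
      rw [one_mul, one_mul]
      exact Submodule.Quotient.norm_mk_le M x
    rw [norm_smul, norm_inv, norm_norm, one_div]
    exact (mul_le_of_le_one_right (by positivity) h1).trans (inv_anti₀ hc hle)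

theorem mem_of_forall_apply_eq_zero (M : Submodule ℝ (Z →L[ℝ] ℝ)) [FiniteDimensional ℝ M]
    {f : Z →L[ℝ] ℝ} (h : ∀ x, (∀ m ∈ M, m x = 0) → f x = 0) : f ∈ M := by
  obtain ⟨n, s, rfl⟩ := Submodule.fg_iff_exists_fin_generating_family.1
    (Module.Finite.iff_fg.1 (inferInstance : FiniteDimensional ℝ M))
  have hf := mem_span_of_iInf_ker_le_ker (L := fun i => (s i : Z →ₗ[ℝ] ℝ))
    (K := (f : Z →ₗ[ℝ] ℝ)) (fun x hx => by
      simp only [Submodule.mem_iInf, LinearMap.mem_ker, ContinuousLinearMap.coe_coe] at hx ⊢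
      refine h x fun m hm => ?_
      obtain ⟨a, rfl⟩ := (Submodule.mem_span_range_iff_exists_fun ℝ).1 hm
      simp [hx])
  obtain ⟨a, ha⟩ := (Submodule.mem_span_range_iff_exists_fun ℝ).1 hf
  refine (Submodule.mem_span_range_iff_exists_fun ℝ).2 ⟨a, ?_⟩
  ext x
  simpa using congrArg (fun u : Z →ₗ[ℝ] ℝ => u x) ha

theorem exists_vector_of_dist_le (M : Submodule ℝ (Z →L[ℝ] ℝ)) [FiniteDimensional ℝ M]
    {f : Z →L[ℝ] ℝ} {c c' : ℝ} (hc' : 0 < c') (hc : c' < c) (h : ∀ m ∈ M, c ≤ ‖m + f‖) :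
    ∃ x : Z, (∀ m ∈ M, m x = 0) ∧ f x = 1 ∧ ‖x‖ ≤ 1 / c' := by
  let K : Submodule ℝ Z :=
    { carrier := {x | ∀ m ∈ M, m x = 0}
      add_mem' := fun hx hy m hm => by simp [hx m hm, hy m hm]
      zero_mem' := fun m _ => map_zero m
      smul_mem' := fun a x hx m hm => by simp [hx m hm] }
  by_cases hK : ∀ x ∈ K, |f x| ≤ c' * ‖x‖
  · exfalso
    obtain ⟨g, hg, hgn⟩ := exists_extension_norm_eq K (f.comp K.subtypeL)
    have hle : ‖g‖ ≤ c' := by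
      rw [hgn]
      exact ContinuousLinearMap.opNorm_le_bound _ hc'.le fun x => hK x x.2
    have hmem : g - f ∈ M := mem_of_forall_apply_eq_zero M fun x hx => by
      have := hg ⟨x, hx⟩
      simp at this
      simp [this]
    have := h _ hmem
    rw [sub_add_cancel] at this
    linarith
  · push Not at hK
    obtain ⟨x, hx, hlt⟩ := hK
    have hpos : 0 < |f x| := (by positivity : 0 ≤ c' * ‖x‖).trans_lt hlt
    refine ⟨(f x)⁻¹ • x, K.smul_mem _ hx, ?_, ?_⟩
    · rw [map_smul, smul_eq_mul, inv_mul_cancel₀ (abs_pos.1 hpos)]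
    · rw [norm_smul, norm_inv, Real.norm_eq_abs, inv_mul_le_iff₀ hpos, mul_one_div,
        le_div_iff₀ hc', mul_comm]
      exact hlt.le

/-- The distance estimate behind both separation lemmas. -/
theorem le_norm_add_of_mem_sup {E : Submodule ℝ Z} {N : ℕ} {y : Fin N → Z} {r : ℝ}
    (h : ∀ e ∈ E, ∀ (b : Fin N → ℝ) (j : Fin N), r * |b j| ≤ ‖e + ∑ i, b i • y i‖) (j : Fin N) :
    ∀ m ∈ E ⊔ Submodule.span ℝ (y '' {i | i ≠ j}), r ≤ ‖m + y j‖ := by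
  classical
  intro m hm
  obtain ⟨e, he, s, hs, rfl⟩ := Submodule.mem_sup.1 hm
  obtain ⟨a, ha, rfl⟩ := (Finsupp.mem_span_image_iff_linearCombination ℝ).1 hs
  have haj : a j = 0 := by
    by_contra h0
    exact ha (Finsupp.mem_support_iff.2 h0) rfl
  have := h e he (fun i => a i + if i = j then 1 else 0) j
  simpa [haj, add_smul, Finset.sum_add_distrib, ite_smul, ← add_assoc,
    Finsupp.linearCombination_apply, Finsupp.sum_fintype] using this

theorem exists_biorthogonal_functionals {E : Submodule ℝ Z} [FiniteDimensional ℝ E] {N : ℕ}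
    {y : Fin N → Z} {r : ℝ} (hr : 0 < r)
    (h : ∀ e ∈ E, ∀ (b : Fin N → ℝ) (j : Fin N), r * |b j| ≤ ‖e + ∑ i, b i • y i‖) :
    ∃ f : Fin N → Z →L[ℝ] ℝ, ∀ j, (∀ e ∈ E, f j e = 0) ∧ (∀ i, i ≠ j → f j (y i) = 0) ∧
      f j (y j) = 1 ∧ ‖f j‖ ≤ 1 / r := by
  choose f hf0 hf1 hf using fun j => by
    have : FiniteDimensional ℝ (Submodule.span ℝ (y '' {i | i ≠ j})) :=
      FiniteDimensional.span_of_finite ℝ (Set.toFinite _)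
    exact exists_functional_of_dist_le _ hr (le_norm_add_of_mem_sup h j)
  exact ⟨f, fun j => ⟨fun e he => hf0 j e (Submodule.mem_sup_left he), fun i hij =>
    hf0 j _ (Submodule.mem_sup_right (Submodule.subset_span ⟨i, hij, rfl⟩)), hf1 j, hf j⟩⟩

theorem exists_biorthogonal_vectors {E : Submodule ℝ (Z →L[ℝ] ℝ)} [FiniteDimensional ℝ E] {N : ℕ}
    {y : Fin N → Z →L[ℝ] ℝ} {r r' : ℝ} (hr' : 0 < r') (hr : r' < r)
    (h : ∀ e ∈ E, ∀ (b : Fin N → ℝ) (j : Fin N), r * |b j| ≤ ‖e + ∑ i, b i • y i‖) :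
    ∃ x : Fin N → Z, ∀ j, (∀ e ∈ E, e (x j) = 0) ∧ (∀ i, i ≠ j → y i (x j) = 0) ∧
      y j (x j) = 1 ∧ ‖x j‖ ≤ 1 / r' := by
  choose x hx0 hx1 hx using fun j => by
    have : FiniteDimensional ℝ (Submodule.span ℝ (y '' {i | i ≠ j})) :=
      FiniteDimensional.span_of_finite ℝ (Set.toFinite _)
    exact exists_vector_of_dist_le _ hr' hr (le_norm_add_of_mem_sup h j)
  exact ⟨x, fun j => ⟨fun e he => hx0 j e (Submodule.mem_sup_left he), fun i hij =>
    hx0 j _ (Submodule.mem_sup_right (Submodule.subset_span ⟨i, hij, rfl⟩)), hx1 j, hx j⟩⟩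

/-- An almost norm-orthogonal system whose span almost contains a given vector. -/
theorem exists_block_approx (hZ : ¬ FiniteDimensional ℝ Z) {E : Submodule ℝ Z}
    [FiniteDimensional ℝ E] (G : Finset (Z →L[ℝ] ℝ)) {r δ : ℝ} (hr0 : 0 < r) (hr : r < 1)
    (hδ : 0 < δ) {w : Z} (hw : w ∈ E) (hwG : ∀ g ∈ G, g w = 0) :
    ∃ (N : ℕ) (y : Fin N → Z), 0 < N ∧ (∀ j, ‖y j‖ ≤ 1) ∧ (∀ j, ∀ g ∈ G, g (y j) = 0) ∧
      (∀ e ∈ E, ∀ (b : Fin N → ℝ) (j : Fin N), r * |b j| ≤ ‖e + ∑ i, b i • y i‖) ∧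
      ∃ s ∈ Submodule.span ℝ (Set.range y), ‖w - s‖ ≤ δ := by
  set t := (1 - r) / (2 * r) with ht
  have ht0 : 0 < t := div_pos (sub_pos.2 hr) (by positivity)
  have hrt : r * (1 + t) = (1 + r) / 2 := by rw [ht]; field_simp; ring
  set κ := ‖w‖ / t with hκ
  have hκ0 : 0 ≤ κ := by positivity
  obtain ⟨N, y, c, hy1, hyG, hy, hc, hcy⟩ := hasSmallBlock hZ E G (r := r * (1 + t))
    (δ := δ / (κ + 1)) (by positivity) (by rw [hrt]; linarith) (by positivity)
  have hN : 0 < N := by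
    rcases Nat.eq_zero_or_pos N with rfl | h
    · simp at hc
    · exact h
  let d : Fin N → ℝ := fun j => t * ‖w‖⁻¹ * SignType.sign (c j)
  have hd : ∀ j, |d j| * ‖w‖ ≤ t := fun j => by
    have h1 : |(SignType.sign (c j) : ℝ)| ≤ 1 := by
      rcases lt_trichotomy (c j) 0 with h | h | h <;> simp [h]
    simp only [d]
    rw [abs_mul, abs_of_nonneg (by positivity)]
    calc t * ‖w‖⁻¹ * |(SignType.sign (c j) : ℝ)| * ‖w‖
        = t * (‖w‖⁻¹ * ‖w‖) * |(SignType.sign (c j) : ℝ)| := by ring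
      _ ≤ t * 1 * 1 := by
        gcongr
        exact inv_mul_le_one
      _ = t := by ring
  have hcd : (κ * ∑ j, c j * d j) • w = w := by
    rcases eq_or_ne w 0 with rfl | hw0
    · simp
    · have : ∑ j, c j * d j = t * ‖w‖⁻¹ * ∑ j, |c j| := by
        rw [Finset.mul_sum]
        refine Finset.sum_congr rfl fun j _ => ?_
        rw [← self_mul_sign (c j)]
        simp only [d]; ring
      rw [this, hc, hκ]
      have := norm_ne_zero_iff.2 hw0
      field_simp
      exact one_smul _ _
  have h1t : 0 < 1 + t := by positivity
  refine ⟨N, fun j => (1 + t)⁻¹ • (y j + d j • w), hN, fun j => ?_, fun j g hg => ?_,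
    fun e he b j => ?_, ∑ j, (κ * (1 + t) * c j) • (1 + t)⁻¹ • (y j + d j • w), ?_, ?_⟩
  · rw [norm_smul, norm_inv, Real.norm_of_nonneg h1t.le, inv_mul_le_iff₀ h1t, mul_one]
    refine (norm_add_le _ _).trans (add_le_add (hy1 j) ?_)
    rw [norm_smul, Real.norm_eq_abs]
    exact hd j
  · simp [hyG j g hg, hwG g hg]
  · have h1 : e + ∑ i, b i • (1 + t)⁻¹ • (y i + d i • w) =
        (e + (∑ i, b i * (1 + t)⁻¹ * d i) • w) + ∑ i, (b i * (1 + t)⁻¹) • y i := by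
      simp only [smul_add, smul_smul, Finset.sum_add_distrib, Finset.sum_smul, mul_assoc]
      abel
    rw [h1]
    refine le_trans (le_of_eq ?_) (hy _ (E.add_mem he (E.smul_mem _ hw)) _ j)
    rw [abs_mul, abs_of_pos (inv_pos.2 h1t)]
    field_simp
  · exact Submodule.sum_mem _ fun j _ =>
      Submodule.smul_mem _ _ (Submodule.subset_span ⟨j, rfl⟩)
  · have h1 : ∑ j, (κ * (1 + t) * c j) • (1 + t)⁻¹ • (y j + d j • w) =
        κ • (∑ j, c j • y j) + w := by
      conv_rhs => rw [← hcd]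
      rw [Finset.smul_sum, Finset.mul_sum, Finset.sum_smul, ← Finset.sum_add_distrib]
      refine Finset.sum_congr rfl fun j _ => ?_
      rw [smul_smul, smul_add, smul_smul, smul_smul]
      congr 2 <;> field_simp
    rw [h1, sub_add_cancel_right, norm_neg, norm_smul, Real.norm_of_nonneg hκ0]
    have := mul_le_mul_of_nonneg_left hcy hκ0
    refine this.trans ?_
    rw [mul_div_assoc', div_le_iff₀ (by positivity)]
    nlinarith

end Separation

section Construction

variable {X : Type*} [NormedAddCommGroup X] [NormedSpace ℝ X]

/-- A finite biorthogonal system with norm bounds, each member of which kills one of `v₀`, `φ₀`. -/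
def IsAdmissible (ε : ℝ) (v₀ : X) (φ₀ : X →L[ℝ] ℝ) (L : List (X × (X →L[ℝ] ℝ))) : Prop :=
  L.Pairwise (fun p q => p.2 q.1 = 0 ∧ q.2 p.1 = 0) ∧
    ∀ p ∈ L, p.2 p.1 = 1 ∧ ‖p.1‖ ≤ 1 ∧ ‖p.2‖ ≤ 1 + ε ∧ (φ₀ p.1 = 0 ∨ p.2 v₀ = 0)

/-- The span of the vectors of a finite system. -/
def fstSpan (L : List (X × (X →L[ℝ] ℝ))) : Submodule ℝ X :=
  Submodule.span ℝ {x | x ∈ L.map Prod.fst}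

/-- The span of the functionals of a finite system. -/
def sndSpan (L : List (X × (X →L[ℝ] ℝ))) : Submodule ℝ (X →L[ℝ] ℝ) :=
  Submodule.span ℝ {f | f ∈ L.map Prod.snd}

variable {ε : ℝ} {v₀ : X} {φ₀ : X →L[ℝ] ℝ} {L L' : List (X × (X →L[ℝ] ℝ))}

instance : FiniteDimensional ℝ (fstSpan L) :=
  FiniteDimensional.span_of_finite ℝ (List.finite_toSet _)

instance : FiniteDimensional ℝ (sndSpan L) :=
  FiniteDimensional.span_of_finite ℝ (List.finite_toSet _)

theorem fst_mem_fstSpan {p : X × (X →L[ℝ] ℝ)} (hp : p ∈ L) : p.1 ∈ fstSpan L :=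
  Submodule.subset_span (List.mem_map_of_mem hp)

theorem snd_mem_sndSpan {p : X × (X →L[ℝ] ℝ)} (hp : p ∈ L) : p.2 ∈ sndSpan L :=
  Submodule.subset_span (List.mem_map_of_mem hp)

theorem fstSpan_mono (h : L ⊆ L') : fstSpan L ≤ fstSpan L' :=
  Submodule.span_mono fun _ hx => List.map_subset _ h hx

theorem sndSpan_mono (h : L ⊆ L') : sndSpan L ≤ sndSpan L' :=
  Submodule.span_mono fun _ hx => List.map_subset _ h hx

theorem IsAdmissible.exists_vector_projection (hL : IsAdmissible ε v₀ φ₀ L) (u : X) :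
    ∃ s ∈ fstSpan L, ∀ p ∈ L, p.2 (u - s) = 0 := by
  induction L with
  | nil => exact ⟨0, Submodule.zero_mem _, by simp⟩
  | cons p L ih =>
    obtain ⟨hpair, hp⟩ := hL
    rw [List.pairwise_cons] at hpair
    obtain ⟨s, hs, hs0⟩ := ih ⟨hpair.2, fun q hq => hp q (List.mem_cons_of_mem _ hq)⟩
    refine ⟨s + p.2 (u - s) • p.1, add_mem (fstSpan_mono (List.subset_cons_self _ _) hs)
      (Submodule.smul_mem _ _ (fst_mem_fstSpan List.mem_cons_self)), fun q hq => ?_⟩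
    rw [← sub_sub, map_sub, map_smul, smul_eq_mul]
    rcases List.mem_cons.1 hq with rfl | hq
    · rw [(hp q List.mem_cons_self).1]; ring
    · rw [hs0 q hq, (hpair.1 q hq).2]; ring

theorem IsAdmissible.exists_functional_projection (hL : IsAdmissible ε v₀ φ₀ L)
    (u : X →L[ℝ] ℝ) : ∃ s ∈ sndSpan L, ∀ p ∈ L, (u - s) p.1 = 0 := by
  induction L with
  | nil => exact ⟨0, Submodule.zero_mem _, by simp⟩
  | cons p L ih =>
    obtain ⟨hpair, hp⟩ := hL
    rw [List.pairwise_cons] at hpair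
    obtain ⟨s, hs, hs0⟩ := ih ⟨hpair.2, fun q hq => hp q (List.mem_cons_of_mem _ hq)⟩
    refine ⟨s + (u - s) p.1 • p.2, add_mem (sndSpan_mono (List.subset_cons_self _ _) hs)
      (Submodule.smul_mem _ _ (snd_mem_sndSpan List.mem_cons_self)), fun q hq => ?_⟩
    rw [← sub_sub, sub_apply, smul_apply, smul_eq_mul]
    rcases List.mem_cons.1 hq with rfl | hq
    · rw [(hp q List.mem_cons_self).1]; ring
    · rw [hs0 q hq, (hpair.1 q hq).1]; ring

theorem IsAdmissible.append_ofFn (hL : IsAdmissible ε v₀ φ₀ L) {N : ℕ} {y : Fin N → X}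
    {f : Fin N → X →L[ℝ] ℝ} (hLy : ∀ p ∈ L, ∀ j, p.2 (y j) = 0) (hfL : ∀ p ∈ L, ∀ j, f j p.1 = 0)
    (hfy : ∀ i j, i ≠ j → f j (y i) = 0)
    (h : ∀ j, f j (y j) = 1 ∧ ‖y j‖ ≤ 1 ∧ ‖f j‖ ≤ 1 + ε ∧ (φ₀ (y j) = 0 ∨ f j v₀ = 0)) :
    IsAdmissible ε v₀ φ₀ (L ++ List.ofFn fun j => (y j, f j)) := by
  refine ⟨List.pairwise_append.2 ⟨hL.1, List.pairwise_ofFn.2 fun i j hij =>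
    ⟨hfy _ _ hij.ne', hfy _ _ hij.ne⟩, fun p hp q hq => ?_⟩, fun p hp => ?_⟩
  · obtain ⟨j, rfl⟩ := List.mem_ofFn.1 hq
    exact ⟨hLy p hp j, hfL p hp j⟩
  · rcases List.mem_append.1 hp with hp | hp
    · exact hL.2 p hp
    · obtain ⟨j, rfl⟩ := List.mem_ofFn.1 hp
      exact h j

theorem IsAdmissible.exists_extension_vector (hX : ¬ FiniteDimensional ℝ X) (hε : 0 < ε)
    (hL : IsAdmissible ε v₀ φ₀ L) (u : X) {δ : ℝ} (hδ : 0 < δ) :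
    ∃ L', IsAdmissible ε v₀ φ₀ L' ∧ L <+: L' ∧ L.length < L'.length ∧
      ∃ s ∈ fstSpan L', ‖u - s‖ ≤ δ := by
  classical
  obtain ⟨s, hs, hs0⟩ := hL.exists_vector_projection u
  have : FiniteDimensional ℝ (Submodule.span ℝ {v₀, u - s}) :=
    FiniteDimensional.span_of_finite ℝ (Set.toFinite _)
  obtain ⟨N, y, hN, hy1, hyG, hy, s', hs', hus⟩ := exists_block_approx hX
    (E := fstSpan L ⊔ Submodule.span ℝ {v₀, u - s}) (L.map Prod.snd).toFinset
    (r := 1 / (1 + ε)) (by positivity) ((div_lt_one (by positivity)).2 (by linarith)) hδ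
    (w := u - s) (Submodule.mem_sup_right (Submodule.subset_span (by simp)))
    (by simpa using fun g x hx => hs0 (x, g) hx)
  obtain ⟨f, hf⟩ := exists_biorthogonal_functionals (by positivity) hy
  refine ⟨L ++ List.ofFn fun j => (y j, f j), hL.append_ofFn (fun p hp j => ?_)
    (fun p hp j => ?_) (fun i j hij => (hf j).2.1 i hij) (fun j => ⟨(hf j).2.2.1, hy1 j, ?_,
      Or.inr ?_⟩), List.prefix_append _ _, by simpa using hN, s + s', ?_, ?_⟩
  · exact hyG j _ (List.mem_toFinset.2 (List.mem_map_of_mem hp))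
  · exact (hf j).1 _ (Submodule.mem_sup_left (fst_mem_fstSpan hp))
  · simpa using (hf j).2.2.2
  · exact (hf j).1 _ (Submodule.mem_sup_right (Submodule.subset_span (by simp)))
  · refine add_mem (fstSpan_mono (List.subset_append_left _ _) hs) (?_ : s' ∈ _)
    refine Submodule.span_le.2 ?_ hs'
    rintro _ ⟨j, rfl⟩
    exact fst_mem_fstSpan (p := (y j, f j))
      (List.mem_append_right _ (List.mem_ofFn.2 ⟨j, rfl⟩))
  · rwa [← sub_sub]

theorem not_finiteDimensional_dual (hX : ¬ FiniteDimensional ℝ X) :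
    ¬ FiniteDimensional ℝ (X →L[ℝ] ℝ) := fun _ =>
  hX (Module.Finite.of_injective
    (NormedSpace.inclusionInDoubleDualLi (𝕜 := ℝ) (E := X)).toLinearMap
    (NormedSpace.inclusionInDoubleDualLi (𝕜 := ℝ) (E := X)).injective)

theorem IsAdmissible.exists_extension_functional (hX : ¬ FiniteDimensional ℝ X) (hε : 0 < ε)
    (hL : IsAdmissible ε v₀ φ₀ L) (u : X →L[ℝ] ℝ) {δ : ℝ} (hδ : 0 < δ) :
    ∃ L', IsAdmissible ε v₀ φ₀ L' ∧ L <+: L' ∧ ∃ s ∈ sndSpan L', ‖u - s‖ ≤ δ := by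
  classical
  obtain ⟨s, hs, hs0⟩ := hL.exists_functional_projection u
  have : FiniteDimensional ℝ (Submodule.span ℝ {φ₀, u - s}) :=
    FiniteDimensional.span_of_finite ℝ (Set.toFinite _)
  have hε' : 1 / (1 + ε) < 1 / (1 + ε / 2) :=
    one_div_lt_one_div_of_lt (by positivity) (by linarith)
  obtain ⟨N, y, -, hy1, hyG, hy, s', hs', hus⟩ := exists_block_approx
    (not_finiteDimensional_dual hX) (E := sndSpan L ⊔ Submodule.span ℝ {φ₀, u - s})
    (L.map fun p => ContinuousLinearMap.apply ℝ ℝ p.1).toFinset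
    (r := 1 / (1 + ε / 2)) (by positivity) ((div_lt_one (by positivity)).2 (by linarith)) hδ
    (w := u - s) (Submodule.mem_sup_right (Submodule.subset_span (by simp)))
    (fun g hg => by
      obtain ⟨p, hp, rfl⟩ := List.mem_map.1 (List.mem_toFinset.1 hg)
      exact hs0 p hp)
  obtain ⟨x, hx⟩ := exists_biorthogonal_vectors (by positivity) hε' hy
  have h1ε : 0 < 1 + ε := by positivity
  refine ⟨L ++ List.ofFn fun j => ((1 + ε)⁻¹ • x j, (1 + ε) • y j),
    hL.append_ofFn (fun p hp j => ?_)
    (fun p hp j => ?_) (fun i j hij => ?_) (fun j => ⟨?_, ?_, ?_, Or.inl ?_⟩),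
    List.prefix_append _ _, s + s', ?_, ?_⟩
  · simp [(hx j).1 _ (Submodule.mem_sup_left (snd_mem_sndSpan hp))]
  · have : y j p.1 = 0 := hyG j _ (List.mem_toFinset.2 (List.mem_map_of_mem hp))
    simp [this]
  · simp [(hx i).2.1 j hij.symm]
  · simp [(hx j).2.2.1, h1ε.ne']
  · rw [norm_smul, norm_inv, Real.norm_of_nonneg h1ε.le, inv_mul_le_iff₀ h1ε, mul_one]
    simpa using (hx j).2.2.2
  · rw [norm_smul, Real.norm_of_nonneg h1ε.le]
    exact mul_le_of_le_one_right h1ε.le (hy1 j)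
  · simp [(hx j).1 _ (Submodule.mem_sup_right (Submodule.subset_span (Set.mem_insert φ₀ _)))]
  · refine add_mem (sndSpan_mono (List.subset_append_left _ _) hs) (?_ : s' ∈ _)
    refine Submodule.span_le.2 ?_ hs'
    rintro _ ⟨j, rfl⟩
    have h1 : (1 + ε) • y j ∈ sndSpan
        (L ++ List.ofFn fun j => ((1 + ε)⁻¹ • x j, (1 + ε) • y j)) :=
      snd_mem_sndSpan (p := ((1 + ε)⁻¹ • x j, (1 + ε) • y j))
        (List.mem_append_right _ (List.mem_ofFn.2 ⟨j, rfl⟩))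
    simpa [smul_smul, h1ε.ne'] using Submodule.smul_mem _ (1 + ε)⁻¹ h1
  · rwa [← sub_sub]

theorem IsAdmissible.exists_extension (hX : ¬ FiniteDimensional ℝ X) (hε : 0 < ε)
    (hL : IsAdmissible ε v₀ φ₀ L) (u : X) (g : X →L[ℝ] ℝ) {δ : ℝ} (hδ : 0 < δ) :
    ∃ L', IsAdmissible ε v₀ φ₀ L' ∧ L <+: L' ∧ L.length < L'.length ∧
      (∃ s ∈ fstSpan L', ‖u - s‖ ≤ δ) ∧ ∃ s ∈ sndSpan L', ‖g - s‖ ≤ δ := by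
  obtain ⟨L₁, h1, h2, h3, s, hs, hus⟩ := hL.exists_extension_vector hX hε u hδ
  obtain ⟨L₂, h4, h5, hg⟩ := h1.exists_extension_functional hX hε g hδ
  exact ⟨L₂, h4, h2.trans h5, h3.trans_le h5.length_le,
    ⟨s, fstSpan_mono h5.subset hs, hus⟩, hg⟩

end Construction

section Limit

variable {X : Type*} [NormedAddCommGroup X] [NormedSpace ℝ X] {ε : ℝ}

/-- A chain of admissible lists of growing length, read off as a sequence. -/
theorem exists_seq_of_prefix_chain {v₀ : X} {φ₀ : X →L[ℝ] ℝ} {L : ℕ → List (X × (X →L[ℝ] ℝ))}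
    (hL : ∀ n, IsAdmissible ε v₀ φ₀ (L n)) (hpre : ∀ n, L n <+: L (n + 1))
    (hlen : ∀ n, (L n).length < (L (n + 1)).length) :
    ∃ a : ℕ → X × (X →L[ℝ] ℝ), (∀ m n, (a m).2 (a n).1 = if m = n then 1 else 0) ∧
      (∀ n, ‖(a n).1‖ ≤ 1 ∧ ‖(a n).2‖ ≤ 1 + ε ∧ (φ₀ (a n).1 = 0 ∨ (a n).2 v₀ = 0)) ∧
      ∀ n, ∀ p ∈ L n, ∃ i, p = a i := by
  have hlt : ∀ n, n < (L (n + 1)).length := fun n => by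
    induction n with
    | zero => exact (Nat.zero_le _).trans_lt (hlen 0)
    | succ n ih => exact (Nat.succ_le_of_lt ih).trans_lt (hlen (n + 1))
  have hmono : ∀ {m n}, m ≤ n → L m <+: L n := fun {m n} hmn => by
    induction hmn with
    | refl => exact List.prefix_rfl
    | step _ ih => exact ih.trans (hpre _)
  let a : ℕ → X × (X →L[ℝ] ℝ) := fun i => (L (i + 1))[i]'(hlt i)
  have ha : ∀ n i (hi : i < (L n).length), (L n)[i] = a i := fun n i hi => by
    rcases le_total n (i + 1) with h | h
    · exact (hmono h).getElem hi
    · exact ((hmono h).getElem (hlt i)).symm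
  have hamem : ∀ i, a i ∈ L (i + 1) := fun i => List.getElem_mem _
  have hpair : ∀ {i j}, i < j → (a i).2 (a j).1 = 0 ∧ (a j).2 (a i).1 = 0 := fun {i j} hij => by
    have h := List.pairwise_iff_getElem.1 (hL (j + 1)).1 i j (hij.trans (hlt j)) (hlt j) hij
    rwa [ha, ha] at h
  refine ⟨a, fun m n => ?_, fun n => ((hL _).2 _ (hamem n)).2, fun n p hp => ?_⟩
  · rcases lt_trichotomy m n with h | rfl | h
    · rw [if_neg h.ne, (hpair h).1]
    · rw [if_pos rfl, ((hL _).2 _ (hamem m)).1]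
    · rw [if_neg h.ne', (hpair h).2]
  · obtain ⟨i, hi, rfl⟩ := List.mem_iff_getElem.1 hp
    exact ⟨i, ha n i hi⟩

/-- A bounded Markushevich basis all of whose rank-one terms vanish on a fixed pair `(v₀, φ₀)`
with `φ₀ v₀ = 1`. -/
theorem exists_bounded_markushevich_basis [TopologicalSpace.SeparableSpace X]
    (hX : ¬ FiniteDimensional ℝ X) (hε : 0 < ε) :
    ∃ (v₀ : X) (φ₀ : X →L[ℝ] ℝ) (x : ℕ → X) (xs : ℕ → X →L[ℝ] ℝ), φ₀ v₀ = 1 ∧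
      (∀ m n, xs m (x n) = if m = n then 1 else 0) ∧
      (∀ n, ‖x n‖ ≤ 1 ∧ ‖xs n‖ ≤ 1 + ε ∧ (φ₀ (x n) = 0 ∨ xs n v₀ = 0)) ∧
      (Submodule.span ℝ (Set.range x)).topologicalClosure = ⊤ ∧
      ∀ v : X, (∀ n, xs n v = 0) → v = 0 := by
  obtain ⟨v₀, hv₀, -⟩ := exists_norm_eq_one_of_finite_functionals hX ∅
  obtain ⟨φ₀, hφ₀⟩ := SeparatingDual.exists_eq_one (R := ℝ)
    (norm_ne_zero_iff.1 (hv₀.trans_ne one_ne_zero))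
  let u := TopologicalSpace.denseSeq X
  have hu : DenseRange u := TopologicalSpace.denseRange_denseSeq X
  choose g hg1 hg using fun k => exists_dual_vector'' ℝ (u k)
  choose step hadm hpre hlen hvec hfun using
    fun (n : ℕ) (L : {L : List (X × (X →L[ℝ] ℝ)) // IsAdmissible ε v₀ φ₀ L}) =>
      L.2.exists_extension hX hε (u n.unpair.1) (g n.unpair.1) (Nat.one_div_pos_of_nat (n := n))
  let S : ℕ → {L : List (X × (X →L[ℝ] ℝ)) // IsAdmissible ε v₀ φ₀ L} := fun n =>
    Nat.rec ⟨[], by simp [IsAdmissible]⟩ (fun n L => ⟨step n L, hadm n L⟩) n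
  obtain ⟨a, hbi, hbd, hmem⟩ := exists_seq_of_prefix_chain (L := fun n => (S n).1)
    (fun n => (S n).2) (fun n => hpre n (S n)) (fun n => hlen n (S n))
  have happ : ∀ (k : ℕ) {δ : ℝ}, 0 < δ → ∃ n : ℕ, n.unpair.1 = k ∧ 1 / ((n : ℝ) + 1) < δ := by
    intro k δ hδ
    obtain ⟨m, hm⟩ := exists_nat_one_div_lt hδ
    refine ⟨Nat.pair k m, by simp, lt_of_le_of_lt ?_ hm⟩
    have : (m : ℝ) ≤ Nat.pair k m := Nat.cast_le.2 (Nat.right_le_pair k m)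
    exact one_div_le_one_div_of_le (by positivity) (by linarith)
  refine ⟨v₀, φ₀, fun n => (a n).1, fun n => (a n).2, hφ₀, hbi, hbd, ?_, fun v hv => ?_⟩
  · rw [Submodule.eq_top_iff']
    have hsub : ∀ k, u k ∈ (Submodule.span ℝ (Set.range fun n => (a n).1)).topologicalClosure := by
      refine fun k => Metric.mem_closure_iff.2 fun δ hδ => ?_
      obtain ⟨n, rfl, hn⟩ := happ k hδ
      obtain ⟨s, hs, hus⟩ := hvec n (S n)
      refine ⟨s, Submodule.span_le.2 ?_ hs, by rw [dist_eq_norm]; exact hus.trans_lt hn⟩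
      intro y hy
      obtain ⟨p, hp, rfl⟩ := List.mem_map.1 hy
      obtain ⟨i, rfl⟩ := hmem (n + 1) p hp
      exact Submodule.subset_span ⟨i, rfl⟩
    intro y
    exact closure_minimal (Set.range_subset_iff.2 hsub) (Submodule.isClosed_topologicalClosure _)
      (hu y)
  · have hgv : ∀ k, g k v = 0 := fun k => by
      by_contra h0
      obtain ⟨n, rfl, hn⟩ := happ k (div_pos (abs_pos.2 h0) (by positivity : 0 < ‖v‖ + 1))
      obtain ⟨s, hs, hus⟩ := hfun n (S n)
      have hsv : s v = 0 := by
        have : sndSpan (step n (S n)) ≤ LinearMap.ker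
            (ContinuousLinearMap.apply ℝ ℝ v : (X →L[ℝ] ℝ) →L[ℝ] ℝ).toLinearMap := by
          refine Submodule.span_le.2 fun f hf => ?_
          obtain ⟨p, hp, rfl⟩ := List.mem_map.1 hf
          obtain ⟨i, rfl⟩ := hmem (n + 1) p hp
          exact hv i
        exact this hs
      have h1 : |(g n.unpair.1 - s) v| ≤ 1 / ((n : ℝ) + 1) * ‖v‖ :=
        ContinuousLinearMap.le_of_opNorm_le _ hus v
      rw [sub_apply, hsv, sub_zero] at h1
      rw [lt_div_iff₀ (by positivity)] at hn
      have : 0 < 1 / ((n : ℝ) + 1) := by positivity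
      nlinarith
    by_contra hv0
    obtain ⟨k, hk⟩ := hu.exists_dist_lt v (half_pos (norm_pos_iff.2 hv0))
    rw [dist_eq_norm] at hk
    have h1 : |g k (v - u k)| ≤ 1 * ‖v - u k‖ := (g k).le_of_opNorm_le (hg1 k) _
    have h2 : g k (u k) = ‖u k‖ := hg k
    rw [map_sub, hgv, h2, zero_sub, abs_neg, abs_norm, one_mul] at h1
    linarith [norm_sub_norm_le v (u k)]

/-- The vanishing of all terms on `(v₀, φ₀)` rules out a partial-sum bound in any order. -/
theorem not_exists_partial_sum_bound {v₀ : X} {φ₀ : X →L[ℝ] ℝ} {x : ℕ → X} {xs : ℕ → X →L[ℝ] ℝ}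
    (h₀ : φ₀ v₀ = 1) (hbi : ∀ m n, xs m (x n) = if m = n then 1 else 0)
    (hor : ∀ n, φ₀ (x n) = 0 ∨ xs n v₀ = 0)
    (hspan : (Submodule.span ℝ (Set.range x)).topologicalClosure = ⊤) (σ : Equiv.Perm ℕ) :
    ¬ ∃ C : ℝ, ∀ m n : ℕ, m ≤ n → ∀ a : ℕ → ℝ,
      ‖∑ i ∈ Finset.range m, a i • x (σ i)‖ ≤ C * ‖∑ i ∈ Finset.range n, a i • x (σ i)‖ := by
  rintro ⟨C, hC⟩
  let P : ℕ → X →L[ℝ] X := fun m =>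
    ∑ i ∈ Finset.range m, (xs (σ i)).smulRight (x (σ i))
  have hP : ∀ m v, P m v = ∑ i ∈ Finset.range m, xs (σ i) v • x (σ i) := fun m v => by
    simp [P]
  have hfix : ∀ v ∈ Submodule.span ℝ (Set.range x), ∃ N, ∀ n, N ≤ n → P n v = v := by
    intro v hv
    induction hv using Submodule.span_induction with
    | mem v hv =>
      obtain ⟨k, rfl⟩ := hv
      refine ⟨σ.symm k + 1, fun n hn => ?_⟩
      rw [hP, Finset.sum_eq_single (σ.symm k)]
      · simp [hbi]
      · intro i _ hi
        rw [hbi, if_neg fun h => hi (by rw [← h, σ.symm_apply_apply]), zero_smul]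
      · intro h
        exact absurd (Finset.mem_range.2 (Nat.lt_of_succ_le hn)) h
    | zero => exact ⟨0, by simp⟩
    | add v w _ _ hv hw =>
      obtain ⟨N, hN⟩ := hv
      obtain ⟨M, hM⟩ := hw
      refine ⟨max N M, fun n hn => ?_⟩
      rw [map_add, hN n (le_of_max_le_left hn), hM n (le_of_max_le_right hn)]
    | smul a v _ hv =>
      obtain ⟨N, hN⟩ := hv
      exact ⟨N, fun n hn => by rw [map_smul, hN n hn]⟩
  have hbound : ∀ m v, ‖P m v‖ ≤ C * ‖v‖ := by
    intro m v
    have hcl : IsClosed {v : X | ‖P m v‖ ≤ C * ‖v‖} :=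
      isClosed_le (P m).continuous.norm (continuous_const.mul continuous_norm)
    refine closure_minimal (s := (Submodule.span ℝ (Set.range x) : Set X)) (fun v hv => ?_) hcl ?_
    · obtain ⟨N, hN⟩ := hfix v hv
      have h := hC m (max m N) (le_max_left _ _) fun i => xs (σ i) v
      rwa [← hP, ← hP, hN _ (le_max_right _ _)] at h
    · rw [← Submodule.topologicalClosure_coe, hspan]
      trivial
  have hzero : ∀ m, φ₀ (P m v₀) = 0 := fun m => by
    rw [hP, map_sum]
    refine Finset.sum_eq_zero fun i _ => ?_
    rcases hor (σ i) with h | h <;> simp [h]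
  have hle : ∀ v ∈ Submodule.span ℝ (Set.range x), 1 ≤ ‖φ₀‖ * ((|C| + 1) * ‖v₀ - v‖) := by
    intro v hv
    obtain ⟨N, hN⟩ := hfix v hv
    have h1 : φ₀ ((v₀ - v) - P N (v₀ - v)) = 1 := by
      rw [map_sub, map_sub (P N), hN N le_rfl, map_sub, map_sub, hzero, h₀]
      ring
    have h2 := φ₀.le_opNorm ((v₀ - v) - P N (v₀ - v))
    rw [h1, norm_one] at h2
    refine h2.trans (mul_le_mul_of_nonneg_left ?_ (norm_nonneg _))
    have h3 := norm_sub_le (v₀ - v) (P N (v₀ - v))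
    have h4 := hbound N (v₀ - v)
    have h5 := mul_le_mul_of_nonneg_right (le_abs_self C) (norm_nonneg (v₀ - v))
    linarith
  have hmem : v₀ ∈ closure (Submodule.span ℝ (Set.range x) : Set X) := by
    rw [← Submodule.topologicalClosure_coe, hspan]
    trivial
  have hK : 0 < ‖φ₀‖ * (|C| + 1) + 1 := by positivity
  obtain ⟨v, hv, hd⟩ := Metric.mem_closure_iff.1 hmem _ (one_div_pos.2 hK)
  rw [dist_eq_norm, lt_div_iff₀ hK] at hd
  have := hle v hv
  nlinarith [norm_nonneg (v₀ - v)]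

/-- The norm `max ‖v‖ (sup |xsₙ v|)`. -/
noncomputable def auerbachNorm (xs : ℕ → X →L[ℝ] ℝ) (v : X) : ℝ :=
  max ‖v‖ (⨆ n, |xs n v|)

variable {xs : ℕ → X →L[ℝ] ℝ}

theorem abs_apply_le_auerbachNorm (hxs : ∀ n, ‖xs n‖ ≤ 1 + ε) (n : ℕ) (v : X) :
    |xs n v| ≤ auerbachNorm xs v :=
  le_max_of_le_right (le_ciSup (f := fun n => |xs n v|)
    ⟨(1 + ε) * ‖v‖, Set.forall_mem_range.2 fun n => (xs n).le_of_opNorm_le (hxs n) v⟩ n)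

theorem auerbachNorm_le {v : X} {c : ℝ} (h1 : ‖v‖ ≤ c) (h2 : ∀ n, |xs n v| ≤ c) :
    auerbachNorm xs v ≤ c :=
  max_le h1 (ciSup_le h2)

theorem auerbachNorm_add_le (hxs : ∀ n, ‖xs n‖ ≤ 1 + ε) (v w : X) :
    auerbachNorm xs (v + w) ≤ auerbachNorm xs v + auerbachNorm xs w := by
  refine auerbachNorm_le ((norm_add_le v w).trans (add_le_add (le_max_left _ _) (le_max_left _ _)))
    fun n => ?_
  rw [map_add]
  exact (abs_add_le _ _).trans (add_le_add (abs_apply_le_auerbachNorm hxs n v)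
    (abs_apply_le_auerbachNorm hxs n w))

theorem auerbachNorm_smul (xs : ℕ → X →L[ℝ] ℝ) (a : ℝ) (v : X) :
    auerbachNorm xs (a • v) = |a| * auerbachNorm xs v := by
  simp only [auerbachNorm, norm_smul, Real.norm_eq_abs, map_smul, smul_eq_mul, abs_mul]
  rw [← Real.mul_iSup_of_nonneg (abs_nonneg a), mul_max_of_nonneg _ _ (abs_nonneg a)]

end Limit

/-- Every infinite-dimensional separable real Banach space `(X, ‖·‖)`
admits, for every `ε > 0`, an equivalent norm `f = |||·|||` with
`‖v‖ ≤ f v ≤ (1+ε)‖v‖` such that `(X, f)` has an Auerbach basis `(xₙ, xₙ*)`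
(`f (xₙ) = 1` and the `f`-dual norm of `xₙ*` is `1`, encoded by `|xₙ* v| ≤ f v` for all
`v` together with `xₙ*(xₙ) = 1 = f (xₙ)`), no permutation of which satisfies a uniform
partial-sum bound; in particular no permutation is equivalent to a Schauder basis. -/
theorem exists_renorming_with_Auerbach_basis_no_permutation_Schauder
    (X : Type*) [NormedAddCommGroup X] [NormedSpace ℝ X] [CompleteSpace X]
    [TopologicalSpace.SeparableSpace X] (hinf : ¬ FiniteDimensional ℝ X)
    (ε : ℝ) (hε : 0 < ε) :
    ∃ f : X → ℝ,
      (∀ v : X, ‖v‖ ≤ f v ∧ f v ≤ (1 + ε) * ‖v‖) ∧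
      (∀ v w : X, f (v + w) ≤ f v + f w) ∧
      (∀ (a : ℝ) (v : X), f (a • v) = |a| * f v) ∧
      ∃ (x : ℕ → X) (xs : ℕ → X →L[ℝ] ℝ),
        (∀ m n, xs m (x n) = if m = n then 1 else 0) ∧
        (Submodule.span ℝ (Set.range x)).topologicalClosure = ⊤ ∧
        (∀ v : X, (∀ n, xs n v = 0) → v = 0) ∧
        (∀ n, f (x n) = 1) ∧
        (∀ n, ∀ v : X, |xs n v| ≤ f v) ∧
        (∀ σ : Equiv.Perm ℕ, ¬ ∃ C : ℝ,
          ∀ m n : ℕ, m ≤ n → ∀ a : ℕ → ℝ,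
            ‖∑ i ∈ Finset.range m, a i • x (σ i)‖ ≤
              C * ‖∑ i ∈ Finset.range n, a i • x (σ i)‖) := by
  obtain ⟨v₀, φ₀, x, xs, h₀, hbi, hbd, hspan, htot⟩ := exists_bounded_markushevich_basis hinf hε
  have hxs : ∀ n, ‖xs n‖ ≤ 1 + ε := fun n => (hbd n).2.1
  refine ⟨auerbachNorm xs, fun v => ⟨le_max_left _ _, auerbachNorm_le ?_ fun n =>
    (xs n).le_of_opNorm_le (hxs n) v⟩, auerbachNorm_add_le hxs, auerbachNorm_smul xs, x, xs, hbi,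
    hspan, htot, fun n => le_antisymm (auerbachNorm_le (hbd n).1 fun m => ?_) ?_,
    abs_apply_le_auerbachNorm hxs,
    not_exists_partial_sum_bound h₀ hbi (fun n => (hbd n).2.2) hspan⟩
  · nlinarith [norm_nonneg v]
  · rw [hbi]
    split_ifs <;> simp
  · simpa [hbi] using abs_apply_le_auerbachNorm hxs n (x n)
end

section
/- The complex Banach space ℓ¹ (of absolutely summable complex sequences) contains an Auerbach basis {x_n, x_n*}_{n∈ℕ} such that for every permutation σ of ℕ there is no constant C < ∞ with ‖Σ_{i≤m} a_i x_{σ(i)}‖ ≤ C‖Σ_{i≤n} a_i x_{σ(i)}‖ for all m ≤ n and all scalars a_1,…,a_n; in particular no permutation of this Auerbach basis is equivalent to a Schauder basis of ℓ¹. -/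
open scoped BigOperators
open scoped ComplexConjugate
open Finset

lemma sum_min_one_sq_div_sq_le {z : ℝ} (hz : 0 ≤ z) (R : ℕ) :
    ∑ r ∈ range R, min 1 (z ^ 2 / ((r : ℝ) + 1) ^ 2) ≤ 4 * z := by
  rcases hz.eq_or_lt with rfl | hz
  · simp
  have key : ∀ R : ℕ, ∑ r ∈ range R, min 1 (z ^ 2 / ((r : ℝ) + 1) ^ 2) ≤ 4 * z * (R / (R + z)) := by
    intro R
    induction R with
    | zero => simp
    | succ R ih =>
      rw [sum_range_succ]
      have hR : (0 : ℝ) ≤ R := R.cast_nonneg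
      have hstep : 4 * z * (((R + 1 : ℕ) : ℝ) / ((R + 1 : ℕ) + z)) - 4 * z * (R / (R + z))
          = 4 * z ^ 2 / ((R + 1 + z) * (R + z)) := by
        push_cast
        field_simp
        ring
      have hmin : min 1 (z ^ 2 / ((R : ℝ) + 1) ^ 2) ≤ 4 * z ^ 2 / ((R + 1 + z) * (R + z)) := by
        rw [le_div_iff₀ (by positivity)]
        rcases le_total z (R + 1) with h | h
        · calc min 1 (z ^ 2 / ((R : ℝ) + 1) ^ 2) * ((R + 1 + z) * (R + z))
              ≤ z ^ 2 / ((R : ℝ) + 1) ^ 2 * (4 * ((R : ℝ) + 1) ^ 2) := by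
                refine mul_le_mul (min_le_right _ _) ?_ (by positivity) (by positivity)
                nlinarith
            _ = 4 * z ^ 2 := by field_simp
        · calc min 1 (z ^ 2 / ((R : ℝ) + 1) ^ 2) * ((R + 1 + z) * (R + z))
              ≤ 1 * (4 * z ^ 2) := by
                refine mul_le_mul (min_le_left _ _) ?_ (by positivity) (by positivity)
                nlinarith
            _ = 4 * z ^ 2 := one_mul _
      linarith
  refine (key R).trans (mul_le_of_le_one_right (by positivity) ?_)
  exact div_le_one_of_le₀ (by linarith) (by positivity)

/-- A discrete interpolation inequality: the `H^{1/2}` energy of a `1`-Lipschitz sequence is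
controlled by its `ℓ¹` norm. -/
lemma sum_sq_norm_sub_div_sq_le {E : Type*} [SeminormedAddCommGroup E] {y : ℕ → E}
    (hy : ∀ j r, ‖y (j + r) - y j‖ ≤ r) (L : ℕ) :
    ∑ j ∈ range L, ∑ r ∈ range L, ‖y (j + (r + 1)) - y j‖ ^ 2 / ((r : ℝ) + 1) ^ 2 ≤
      8 * ∑ j ∈ range L, ‖y j‖ + 8 * ∑ k ∈ range (2 * L + 1), ‖y k‖ := by
  set h : ℕ → ℕ → ℝ := fun k r => min 1 ((2 * ‖y k‖) ^ 2 / ((r : ℝ) + 1) ^ 2) with hh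
  have hnn : ∀ k r, 0 ≤ h k r := fun k r => le_min zero_le_one (by positivity)
  have hsum : ∀ k, ∑ r ∈ range L, h k r ≤ 8 * ‖y k‖ := fun k =>
    (sum_min_one_sq_div_sq_le (by positivity) L).trans_eq (by ring)
  have hpair : ∀ j r, ‖y (j + (r + 1)) - y j‖ ^ 2 / ((r : ℝ) + 1) ^ 2 ≤
      h j r + h (j + (r + 1)) r := by
    intro j r
    have h1 : ‖y (j + (r + 1)) - y j‖ ^ 2 / ((r : ℝ) + 1) ^ 2 ≤ 1 := by
      refine div_le_one_of_le₀ ?_ (by positivity)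
      have := hy j (r + 1)
      push_cast at this
      gcongr
    have h2 := norm_sub_le (y (j + (r + 1))) (y j)
    rcases le_total ‖y j‖ ‖y (j + (r + 1))‖ with hle | hle
    · refine le_add_of_nonneg_of_le (hnn _ _) (le_min h1 ?_)
      gcongr
      linarith
    · refine le_add_of_le_of_nonneg (le_min h1 ?_) (hnn _ _)
      gcongr
      linarith
  calc _ ≤ ∑ j ∈ range L, ∑ r ∈ range L, (h j r + h (j + (r + 1)) r) :=
        sum_le_sum fun j _ => sum_le_sum fun r _ => hpair j r
    _ = ∑ j ∈ range L, ∑ r ∈ range L, h j r +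
          ∑ r ∈ range L, ∑ j ∈ range L, h (j + (r + 1)) r := by
        rw [sum_comm (s := range L) (t := range L) (f := fun r j => h (j + (r + 1)) r),
          ← sum_add_distrib]
        simp_rw [sum_add_distrib]
    _ ≤ ∑ j ∈ range L, ∑ r ∈ range L, h j r +
          ∑ r ∈ range L, ∑ k ∈ range (2 * L + 1), h k r := by
        gcongr with r hr
        rw [← sum_image (f := fun k => h k r) (g := fun j => j + (r + 1))
          (fun a _ b _ hab => by simpa using hab)]
        refine sum_le_sum_of_subset_of_nonneg ?_ fun _ _ _ => hnn _ _
        intro k hk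
        simp only [mem_image, mem_range] at hk hr ⊢
        omega
    _ ≤ _ := by
        rw [sum_comm (s := range L) (t := range (2 * L + 1)), mul_sum, mul_sum]
        exact add_le_add (sum_le_sum fun k _ => hsum k) (sum_le_sum fun k _ => hsum k)

section Characters

variable {N : ℕ} [NeZero N]

lemma sum_stdAddChar_mul_conj (a b : ZMod N) :
    ∑ s : ZMod N, ZMod.stdAddChar (a * s) * conj (ZMod.stdAddChar (b * s)) =
      if a = b then (N : ℂ) else 0 := by
  have := AddChar.sum_mulShift (a - b) (ZMod.isPrimitive_stdAddChar N)
  simp only [sub_eq_zero, ZMod.card] at this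
  rw [← Nat.cast_zero, ← Nat.cast_ite, ← this]
  refine sum_congr rfl fun s _ => ?_
  rw [← AddChar.map_neg_eq_conj, ← AddChar.map_add_eq_mul]
  congr 1
  ring

lemma sum_stdAddChar_mul_sum_conj (w : ZMod N → ℂ) (t : ZMod N) :
    ∑ a : ZMod N, ZMod.stdAddChar (a * t) *
      ∑ s : ZMod N, conj (ZMod.stdAddChar (a * s) : ℂ) * w s = N * w t := by
  simp only [mul_sum]
  rw [sum_comm]
  calc _ = ∑ s : ZMod N, (if t = s then (N : ℂ) else 0) * w s := by
        refine sum_congr rfl fun s _ => ?_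
        rw [← sum_stdAddChar_mul_conj, sum_mul]
        refine sum_congr rfl fun a _ => ?_
        rw [mul_comm t, mul_comm s]
        ring
    _ = _ := by simp

lemma sum_sq_norm_sum_stdAddChar {ι : Type*} (T : Finset ι) {b : ι → ZMod N}
    (hb : Set.InjOn b T) :
    ∑ s : ZMod N, ‖∑ i ∈ T, (ZMod.stdAddChar (b i * s) : ℂ)‖ ^ 2 = N * #T := by
  classical
  have : ((∑ s : ZMod N, ‖∑ i ∈ T, (ZMod.stdAddChar (b i * s) : ℂ)‖ ^ 2 : ℝ) : ℂ) =
      N * #T := by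
    push_cast
    simp_rw [← Complex.mul_conj', map_sum, sum_mul_sum]
    rw [sum_comm]
    calc _ = ∑ i ∈ T, ∑ j ∈ T, if i = j then (N : ℂ) else 0 := by
          refine sum_congr rfl fun i hi => ?_
          rw [sum_comm]
          refine sum_congr rfl fun j hj => ?_
          rw [sum_stdAddChar_mul_conj]
          simp only [hb.eq_iff hi hj]
      _ = _ := by simp [mul_comm]
  exact_mod_cast this

/-- Lebesgue constants of the characters of `ZMod N`, taken in any order, grow at least
logarithmically on average. -/
lemma harmonic_le_of_sum_norm_le {L : ℕ} (hL : 0 < L) {b : ℕ → ZMod N}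
    (hb : Set.InjOn b (Set.Iio (2 * L))) {C : ℝ} (hC : 0 ≤ C)
    (hbound : ∀ k ≤ 2 * L,
      ∑ s : ZMod N, ‖∑ i ∈ range k, (ZMod.stdAddChar (b i * s) : ℂ)‖ ≤ C * N) :
    ∑ r ∈ range L, 1 / ((r : ℝ) + 1) ≤ 32 * C := by
  set y : ZMod N → ℕ → ℂ := fun s k => ∑ i ∈ range k, (ZMod.stdAddChar (b i * s) : ℂ) with hy
  have hdiff : ∀ s j r, y s (j + r) - y s j =
      ∑ i ∈ Ico j (j + r), (ZMod.stdAddChar (b i * s) : ℂ) := fun s j r =>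
    (sum_Ico_eq_sub _ (Nat.le_add_right j r)).symm
  have hlip : ∀ s j r, ‖y s (j + r) - y s j‖ ≤ r := by
    intro s j r
    rw [hdiff]
    refine (norm_sum_le _ _).trans_eq ?_
    simp
  have henergy : ∑ s, ∑ j ∈ range L, ∑ r ∈ range L,
      ‖y s (j + (r + 1)) - y s j‖ ^ 2 / ((r : ℝ) + 1) ^ 2 =
      N * L * ∑ r ∈ range L, 1 / ((r : ℝ) + 1) := by
    rw [sum_comm]
    have : ∀ j ∈ range L, ∑ s, ∑ r ∈ range L,
        ‖y s (j + (r + 1)) - y s j‖ ^ 2 / ((r : ℝ) + 1) ^ 2 =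
        N * ∑ r ∈ range L, 1 / ((r : ℝ) + 1) := by
      intro j hj
      rw [sum_comm, mul_sum]
      refine sum_congr rfl fun r hr => ?_
      rw [← sum_div]
      simp_rw [hdiff]
      rw [sum_sq_norm_sum_stdAddChar]
      · simp
        field_simp
      · refine hb.mono fun i hi => ?_
        simp only [coe_Ico, Set.mem_Ico, Set.mem_Iio, mem_range] at *
        omega
    rw [sum_congr rfl this]
    simp
    ring
  have hle : (N : ℝ) * L * ∑ r ∈ range L, 1 / ((r : ℝ) + 1) ≤
      8 * ∑ j ∈ range L, C * N + 8 * ∑ k ∈ range (2 * L + 1), C * N := by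
    rw [← henergy]
    refine (sum_le_sum fun s _ => sum_sq_norm_sub_div_sq_le (hlip s) L).trans ?_
    rw [sum_add_distrib, ← mul_sum, ← mul_sum, sum_comm, sum_comm (t := range (2 * L + 1))]
    gcongr with j hj k hk
    · exact hbound j (by simp at hj; omega)
    · exact hbound k (by simp at hk; omega)
  have hN : (0 : ℝ) < N := by exact_mod_cast NeZero.pos N
  have hL' : (1 : ℝ) ≤ L := by exact_mod_cast hL
  simp only [sum_const, card_range, nsmul_eq_mul] at hle
  push_cast at hle
  refine le_of_mul_le_mul_left (hle.trans ?_) (show (0 : ℝ) < N * L by positivity)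
  have := mul_le_mul_of_nonneg_right hL' (show (0 : ℝ) ≤ C * N by positivity)
  nlinarith

end Characters

lemma exists_strictMonoOn_comp_surjOn {α : Type*} [Fintype α] [Nonempty α] {f : α → ℕ}
    (hf : Function.Injective f) :
    ∃ b : ℕ → α, StrictMonoOn (f ∘ b) (Set.Iio (Fintype.card α)) ∧
      ∀ a, ∃ j < Fintype.card α, b j = a := by
  classical
  have hcard : #(univ.image f) = Fintype.card α := card_image_of_injective _ hf
  set g := (univ.image f).orderEmbOfFin hcard
  have hg : ∀ k, ∃ a, f a = g k := fun k => by
    have := (univ.image f).orderEmbOfFin_mem hcard k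
    rw [mem_image] at this
    simpa using this
  choose c hc using hg
  refine ⟨fun k => if h : k < Fintype.card α then c ⟨k, h⟩ else Classical.arbitrary α, ?_, ?_⟩
  · intro i hi j hj hij
    simp only [Set.mem_Iio] at hi hj
    simpa [hi, hj, hc] using hij
  · intro a
    have : f a ∈ Set.range g := by
      rw [range_orderEmbOfFin]
      simp
    obtain ⟨k, hk⟩ := this
    exact ⟨k, k.2, by simpa using hf ((hc k).trans hk)⟩

section BlockCharacters

variable (e : (Σ n : ℕ, ZMod (n + 1)) ≃ ℕ)

/-- The normalized characters of `ZMod (n + 1)`, placed on the `n`-th block of `ℓ¹`. -/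
noncomputable def blockCharacter (p : Σ n : ℕ, ZMod (n + 1)) : lp (fun _ : ℕ => ℂ) 1 :=
  ∑ s : ZMod (p.1 + 1), (((p.1 + 1 : ℕ) : ℂ)⁻¹ * ZMod.stdAddChar (p.2 * s)) •
    lp.single 1 (e ⟨p.1, s⟩) (1 : ℂ)

/-- The Fourier coefficient functionals of the `n`-th block of `ℓ¹`. -/
noncomputable def blockCoefficient (p : Σ n : ℕ, ZMod (n + 1)) :
    lp (fun _ : ℕ => ℂ) 1 →L[ℂ] ℂ :=
  ∑ s : ZMod (p.1 + 1), conj (ZMod.stdAddChar (p.2 * s) : ℂ) •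
    lp.evalCLM ℂ (fun _ : ℕ => ℂ) 1 (e ⟨p.1, s⟩)

lemma blockCoefficient_apply (p : Σ n : ℕ, ZMod (n + 1)) (v : lp (fun _ : ℕ => ℂ) 1) :
    blockCoefficient e p v =
      ∑ s : ZMod (p.1 + 1), conj (ZMod.stdAddChar (p.2 * s) : ℂ) * v (e ⟨p.1, s⟩) := by
  rw [blockCoefficient, _root_.sum_apply]
  rfl

lemma blockCharacter_apply (n : ℕ) (a s : ZMod (n + 1)) :
    blockCharacter e ⟨n, a⟩ (e ⟨n, s⟩) =
      ((n + 1 : ℕ) : ℂ)⁻¹ * ZMod.stdAddChar (a * s) := by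
  rw [blockCharacter, lp.coeFn_sum, Finset.sum_apply, sum_eq_single s]
  · simp
  · intro t _ hts
    simp [hts.symm]
  · simp

lemma blockCharacter_apply_of_ne {m n : ℕ} (hmn : m ≠ n) (a : ZMod (n + 1)) (s : ZMod (m + 1)) :
    blockCharacter e ⟨n, a⟩ (e ⟨m, s⟩) = 0 := by
  rw [blockCharacter, lp.coeFn_sum, Finset.sum_apply]
  exact sum_eq_zero fun t _ => by simp [hmn]

lemma sum_norm_block_le (n : ℕ) (v : lp (fun _ : ℕ => ℂ) 1) :
    ∑ s : ZMod (n + 1), ‖v (e ⟨n, s⟩)‖ ≤ ‖v‖ := by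
  classical
  have h := lp.sum_rpow_le_norm_rpow (by simp) v
    (univ.image fun s : ZMod (n + 1) => e ⟨n, s⟩)
  rw [sum_image (fun a _ b _ hab => by simpa using hab)] at h
  simpa using h

lemma blockCoefficient_blockCharacter (p q : Σ n : ℕ, ZMod (n + 1)) :
    blockCoefficient e p (blockCharacter e q) = if p = q then 1 else 0 := by
  obtain ⟨m, a⟩ := p
  obtain ⟨n, b⟩ := q
  rw [blockCoefficient_apply]
  by_cases hmn : m = n
  · subst hmn
    have hm : ((m + 1 : ℕ) : ℂ) ≠ 0 := by exact_mod_cast m.succ_ne_zero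
    have := sum_stdAddChar_mul_conj b a
    simp only [blockCharacter_apply]
    calc _ = ((m + 1 : ℕ) : ℂ)⁻¹ * ∑ s : ZMod (m + 1),
          ZMod.stdAddChar (b * s) * conj (ZMod.stdAddChar (a * s)) := by
          rw [mul_sum]
          exact sum_congr rfl fun s _ => by ring
      _ = _ := by
          rw [this]
          by_cases hab : b = a
          · simp only [hab, if_true]
            exact inv_mul_cancel₀ hm
          · simp [hab, Ne.symm hab]
  · simp [blockCharacter_apply_of_ne e hmn, hmn]

lemma norm_blockCharacter_le (p : Σ n : ℕ, ZMod (n + 1)) : ‖blockCharacter e p‖ ≤ 1 := by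
  refine (norm_sum_le _ _).trans_eq ?_
  have hm : ((p.1 + 1 : ℕ) : ℝ) ≠ 0 := by exact_mod_cast p.1.succ_ne_zero
  simp only [norm_smul, norm_mul, norm_inv, Complex.norm_natCast, AddChar.norm_apply, mul_one,
    lp.norm_single one_pos, norm_one, sum_const, card_univ, ZMod.card, nsmul_eq_mul]
  exact mul_inv_cancel₀ hm

lemma norm_blockCoefficient_le (p : Σ n : ℕ, ZMod (n + 1)) : ‖blockCoefficient e p‖ ≤ 1 := by
  refine ContinuousLinearMap.opNorm_le_bound _ zero_le_one fun v => ?_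
  rw [blockCoefficient_apply, one_mul]
  refine (norm_sum_le _ _).trans (le_trans (le_of_eq ?_) (sum_norm_block_le e p.1 v))
  simp

lemma one_le_norm_blockCoefficient_mul (p : Σ n : ℕ, ZMod (n + 1)) :
    1 ≤ ‖blockCoefficient e p‖ * ‖blockCharacter e p‖ := by
  have := (blockCoefficient e p).le_opNorm (blockCharacter e p)
  simpa [blockCoefficient_blockCharacter] using this

lemma norm_blockCharacter (p : Σ n : ℕ, ZMod (n + 1)) : ‖blockCharacter e p‖ = 1 := by
  refine le_antisymm (norm_blockCharacter_le e p) ?_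
  nlinarith [one_le_norm_blockCoefficient_mul e p, norm_blockCoefficient_le e p,
    norm_nonneg (blockCharacter e p)]

lemma norm_blockCoefficient (p : Σ n : ℕ, ZMod (n + 1)) : ‖blockCoefficient e p‖ = 1 := by
  refine le_antisymm (norm_blockCoefficient_le e p) ?_
  simpa [norm_blockCharacter] using one_le_norm_blockCoefficient_mul e p

lemma single_eq_sum_blockCharacter (n : ℕ) (t : ZMod (n + 1)) :
    lp.single 1 (e ⟨n, t⟩) (1 : ℂ) =
      ∑ a : ZMod (n + 1), conj (ZMod.stdAddChar (a * t) : ℂ) • blockCharacter e ⟨n, a⟩ := by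
  have hn : ((n + 1 : ℕ) : ℂ) ≠ 0 := by exact_mod_cast n.succ_ne_zero
  ext i
  obtain ⟨⟨m, s⟩, rfl⟩ := e.surjective i
  rw [lp.coeFn_sum, Finset.sum_apply]
  simp only [lp.coeFn_smul, Pi.smul_apply, smul_eq_mul]
  by_cases hmn : m = n
  · subst hmn
    simp only [blockCharacter_apply]
    have := sum_stdAddChar_mul_conj s t
    calc _ = ((m + 1 : ℕ) : ℂ)⁻¹ * ∑ a : ZMod (m + 1),
          ZMod.stdAddChar (s * a) * conj (ZMod.stdAddChar (t * a)) := by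
          rw [this]
          by_cases hst : s = t
          · simp only [hst, if_true]
            rw [inv_mul_cancel₀ hn]
            simp
          · simp [lp.single_apply, hst]
      _ = _ := by
          rw [mul_sum]
          refine sum_congr rfl fun a _ => ?_
          rw [mul_comm s, mul_comm t]
          ring
  · simp [blockCharacter_apply_of_ne e hmn, lp.single_apply, hmn]

lemma topologicalClosure_span_blockCharacter :
    (Submodule.span ℂ (Set.range (blockCharacter e))).topologicalClosure = ⊤ := by
  rw [eq_top_iff]
  intro v _
  refine mem_closure_of_tendsto (lp.hasSum_single ENNReal.one_ne_top v)
    (Filter.Eventually.of_forall fun T => Submodule.sum_mem _ fun i _ => ?_)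
  obtain ⟨⟨n, t⟩, rfl⟩ := e.surjective i
  rw [← mul_one (v (e ⟨n, t⟩)), ← smul_eq_mul, lp.single_smul, single_eq_sum_blockCharacter]
  exact Submodule.smul_mem _ _ (Submodule.sum_mem _ fun a _ =>
    Submodule.smul_mem _ _ (Submodule.subset_span ⟨_, rfl⟩))

lemma eq_zero_of_blockCoefficient_eq_zero {v : lp (fun _ : ℕ => ℂ) 1}
    (hv : ∀ p, blockCoefficient e p v = 0) : v = 0 := by
  ext i
  obtain ⟨⟨n, t⟩, rfl⟩ := e.surjective i
  have hn : ((n + 1 : ℕ) : ℂ) ≠ 0 := by exact_mod_cast n.succ_ne_zero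
  have h := sum_stdAddChar_mul_sum_conj (fun s : ZMod (n + 1) => (v (e ⟨n, s⟩) : ℂ)) t
  simp only [← blockCoefficient_apply e ⟨n, _⟩ v, hv, mul_zero, sum_const_zero] at h
  exact (mul_eq_zero.mp h.symm).resolve_left hn

/-- A uniform partial-sum bound for the block characters in some order bounds all harmonic sums. -/
lemma harmonic_le_of_partial_sum_bound (τ : ℕ ≃ Σ n : ℕ, ZMod (n + 1)) {C : ℝ} (hC : 0 ≤ C)
    (hbound : ∀ m n : ℕ, m ≤ n → ∀ a : ℕ → ℂ,
      ‖∑ i ∈ range m, a i • blockCharacter e (τ i)‖ ≤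
        C * ‖∑ i ∈ range n, a i • blockCharacter e (τ i)‖)
    {L : ℕ} (hL : 0 < L) :
    ∑ r ∈ range L, 1 / ((r : ℝ) + 1) ≤ 32 * C := by
  classical
  set n := 2 * L with hn
  set pos : ZMod (n + 1) → ℕ := fun a => τ.symm ⟨n, a⟩ with hpos
  have hinj : Function.Injective pos := fun a b hab => by simpa [hpos] using hab
  obtain ⟨b, hmono, hsurj⟩ := exists_strictMonoOn_comp_surjOn hinj
  rw [ZMod.card] at hmono hsurj
  have hbinj : Set.InjOn b (Set.Iio (n + 1)) := fun i hi j hj hij =>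
    hmono.injOn hi hj (congrArg pos hij)
  set c : ℕ → ℂ := fun i => if i ∈ univ.image pos then 1 else 0 with hc
  have hpartial : ∀ T : Finset ℕ, ∑ i ∈ T, c i • blockCharacter e (τ i) =
      ∑ a with pos a ∈ T, blockCharacter e ⟨n, a⟩ := by
    intro T
    simp only [hc, ite_smul, one_smul, zero_smul]
    rw [← sum_filter]
    symm
    refine sum_nbij pos (fun a ha => ?_) hinj.injOn (fun i hi => ?_) fun a _ => by simp [hpos]
    · simpa using ha
    · obtain ⟨hiT, a, rfl⟩ := by simpa using hi
      exact ⟨a, by simpa using hiT, rfl⟩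
  obtain ⟨K, hK⟩ := (univ.image pos).exists_nat_subset_range
  have htotal : ∑ i ∈ range K, c i • blockCharacter e (τ i) =
      lp.single 1 (e ⟨n, 0⟩) (1 : ℂ) := by
    rw [hpartial, single_eq_sum_blockCharacter, filter_true_of_mem]
    · simp
    · exact fun a _ => hK (mem_image_of_mem _ (mem_univ a))
  refine harmonic_le_of_sum_norm_le (N := n + 1) hL
    (hbinj.mono (Set.Iio_subset_Iio (by omega))) hC fun k hk => ?_
  have hprefix : ∑ i ∈ range (pos (b k)), c i • blockCharacter e (τ i) =
      ∑ j ∈ range k, blockCharacter e ⟨n, b j⟩ := by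
    rw [hpartial, ← sum_image (f := fun a => blockCharacter e ⟨n, a⟩) (s := range k) (g := b)]
    · refine sum_congr ?_ fun _ _ => rfl
      ext a
      obtain ⟨j, hj, rfl⟩ := hsurj a
      have hlt := hmono.lt_iff_lt (a := j) (b := k) hj (by simp; omega)
      simp only [Function.comp_apply] at hlt
      simp only [mem_filter, mem_univ, true_and, mem_range, hlt, mem_image]
      refine ⟨fun h => ⟨j, h, rfl⟩, ?_⟩
      rintro ⟨i, hi, hij⟩
      rwa [← hbinj (by simp; omega) hj hij]
    · exact hbinj.mono fun i hi => by simp at hi ⊢; omega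
  have hnorm : ‖∑ j ∈ range k, blockCharacter e ⟨n, b j⟩‖ ≤ C := by
    have hle : pos (b k) ≤ K :=
      (mem_range.mp (hK (mem_image_of_mem _ (mem_univ (b k))))).le
    have := hbound _ _ hle c
    rwa [hprefix, htotal, lp.norm_single one_pos, norm_one, mul_one] at this
  have hN : (0 : ℝ) < (n + 1 : ℕ) := by positivity
  rw [← div_le_iff₀ hN]
  refine le_trans (le_of_eq ?_) ((sum_norm_block_le e n _).trans hnorm)
  rw [sum_div]
  refine sum_congr rfl fun s _ => ?_
  rw [lp.coeFn_sum, Finset.sum_apply]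
  simp only [blockCharacter_apply, ← mul_sum, norm_mul, norm_inv, Complex.norm_natCast]
  rw [div_eq_inv_mul]

end BlockCharacters

/-- The complex Banach space `ℓ¹` contains an Auerbach basis
`(xₙ, xₙ*)` such that for every permutation `σ` of `ℕ` no constant `C` gives a uniform
partial-sum bound; in particular no permutation of this Auerbach basis is equivalent to
a Schauder basis of `ℓ¹`. -/
theorem l1_exists_Auerbach_basis_no_permutation_Schauder :
    ∃ (x : ℕ → lp (fun _ : ℕ => ℂ) 1)
      (xs : ℕ → lp (fun _ : ℕ => ℂ) 1 →L[ℂ] ℂ),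
      (∀ m n, xs m (x n) = if m = n then 1 else 0) ∧
      (Submodule.span ℂ (Set.range x)).topologicalClosure = ⊤ ∧
      (∀ v : lp (fun _ : ℕ => ℂ) 1, (∀ n, xs n v = 0) → v = 0) ∧
      (∀ n, ‖x n‖ = 1) ∧
      (∀ n, ‖xs n‖ = 1) ∧
      ∀ σ : Equiv.Perm ℕ, ¬ ∃ C : ℝ,
        ∀ m n : ℕ, m ≤ n → ∀ a : ℕ → ℂ,
          ‖∑ i ∈ Finset.range m, a i • x (σ i)‖ ≤
            C * ‖∑ i ∈ Finset.range n, a i • x (σ i)‖ := by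
  have : Infinite (Σ n : ℕ, ZMod (n + 1)) :=
    Infinite.of_injective (fun n => (⟨n, 0⟩ : Σ n : ℕ, ZMod (n + 1)))
      fun m n h => congrArg Sigma.fst h
  obtain ⟨e⟩ := nonempty_equiv_of_countable (α := Σ n : ℕ, ZMod (n + 1)) (β := ℕ)
  refine ⟨fun n => blockCharacter e (e.symm n), fun n => blockCoefficient e (e.symm n),
    fun m n => ?_, ?_, fun v hv => ?_, fun n => norm_blockCharacter e _,
    fun n => norm_blockCoefficient e _, ?_⟩
  · simp [blockCoefficient_blockCharacter]
  · rw [← topologicalClosure_span_blockCharacter e, ← e.symm.surjective.range_comp]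
    rfl
  · refine eq_zero_of_blockCoefficient_eq_zero e fun p => ?_
    simpa using hv (e p)
  · rintro σ ⟨C, hC⟩
    obtain ⟨L, hL, hlarge⟩ := ((Filter.eventually_gt_atTop 0).and
      (Real.tendsto_sum_range_one_div_nat_succ_atTop.eventually_gt_atTop
        (32 * max C 0))).exists
    refine hlarge.not_ge (harmonic_le_of_partial_sum_bound e (σ.trans e.symm) (le_max_right C 0)
      (fun m n hmn a => (hC m n hmn a).trans ?_) hL)
    exact mul_le_mul_of_nonneg_right (le_max_left C 0) (norm_nonneg _)
end

section
/- Let 1 < p < ∞ with p ≠ 2. The complex Banach space ℓᵖ contains an Auerbach basis {x_n, x_n*}_{n∈ℕ} that is not an unconditional Schauder basis: there is no constant K < ∞ such that for every n, all scalars a_1,…,a_n, and all signs θ_1,…,θ_n ∈ {−1,1}, one has ‖Σ_{i=1}^n θ_i a_i x_i‖ ≤ K‖Σ_{i=1}^n a_i x_i‖. -/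
open scoped BigOperators ENNReal

noncomputable section

namespace LpAuerbach

/-! ### Walsh matrices as Kronecker powers of a `4 × 4` Hadamard matrix -/

/-- The symmetric Hadamard matrix of order four with constant first row. -/
def hadamardFour : Matrix (Fin 4) (Fin 4) ℝ :=
  !![1, 1, 1, 1; 1, -1, 1, -1; 1, 1, -1, -1; 1, -1, -1, 1]

/-- A sign vector which `hadamardFour` maps to twice itself. -/
def bentFour : Fin 4 → ℝ := ![1, 1, 1, -1]

/-- The `k`-th Kronecker power of `hadamardFour`. -/
def walsh {k : ℕ} (s t : Fin k → Fin 4) : ℝ := ∏ i, hadamardFour (s i) (t i)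

/-- The `k`-th tensor power of `bentFour`. -/
def bent {k : ℕ} (s : Fin k → Fin 4) : ℝ := ∏ i, bentFour (s i)

lemma hadamardFour_symm (s t : Fin 4) : hadamardFour s t = hadamardFour t s := by
  fin_cases s <;> fin_cases t <;> simp [hadamardFour]

lemma hadamardFour_orthogonal (s s' : Fin 4) :
    ∑ t, hadamardFour s t * hadamardFour s' t = if s = s' then 4 else 0 := by
  fin_cases s <;> fin_cases s' <;> simp [hadamardFour, Fin.sum_univ_four] <;> norm_num

lemma abs_hadamardFour (s t : Fin 4) : |hadamardFour s t| = 1 := by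
  fin_cases s <;> fin_cases t <;> simp [hadamardFour]

lemma sum_bentFour_mul (t : Fin 4) :
    ∑ s, bentFour s * hadamardFour s t = 2 * bentFour t := by
  fin_cases t <;> simp [hadamardFour, bentFour, Fin.sum_univ_four] <;> norm_num

lemma abs_bentFour (s : Fin 4) : |bentFour s| = 1 := by
  fin_cases s <;> simp [bentFour]

lemma sum_prod_pi {k : ℕ} (f : Fin k → Fin 4 → ℝ) :
    ∑ s : Fin k → Fin 4, ∏ i, f i (s i) = ∏ i, ∑ j, f i j := by
  rw [Finset.prod_univ_sum, Fintype.piFinset_univ]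

lemma walsh_symm {k : ℕ} (s t : Fin k → Fin 4) : walsh s t = walsh t s :=
  Finset.prod_congr rfl fun _ _ => hadamardFour_symm _ _

lemma walsh_orthogonal {k : ℕ} (s s' : Fin k → Fin 4) :
    ∑ t, walsh s t * walsh s' t = if s = s' then 4 ^ k else 0 := by
  simp only [walsh, ← Finset.prod_mul_distrib]
  rw [sum_prod_pi fun i j => hadamardFour (s i) j * hadamardFour (s' i) j]
  simp only [hadamardFour_orthogonal]
  split_ifs with h
  · simp [h]
  · obtain ⟨i, hi⟩ := Function.ne_iff.mp h
    exact Finset.prod_eq_zero (Finset.mem_univ i) (if_neg hi)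

lemma abs_walsh {k : ℕ} (s t : Fin k → Fin 4) : |walsh s t| = 1 := by
  simp [walsh, Finset.abs_prod, abs_hadamardFour]

lemma walsh_zero_left {k : ℕ} (t : Fin k → Fin 4) : walsh 0 t = 1 := by
  refine Finset.prod_eq_one fun i _ => ?_
  generalize t i = j
  fin_cases j <;> simp [hadamardFour]

lemma sum_walsh {k : ℕ} (t : Fin k → Fin 4) :
    ∑ s, walsh s t = if t = 0 then 4 ^ k else 0 := by
  simpa [walsh_zero_left, walsh_symm _ t] using walsh_orthogonal t 0

lemma sum_bent_mul_walsh {k : ℕ} (t : Fin k → Fin 4) :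
    ∑ s, bent s * walsh s t = 2 ^ k * bent t := by
  simp only [walsh, bent, ← Finset.prod_mul_distrib]
  rw [sum_prod_pi fun i j => bentFour j * hadamardFour j (t i)]
  simp [sum_bentFour_mul, Finset.prod_mul_distrib]

lemma abs_bent {k : ℕ} (s : Fin k → Fin 4) : |bent s| = 1 := by
  simp [bent, Finset.abs_prod, abs_bentFour]

/-! ### Finitely supported vectors and functionals on `ℓᵖ` -/

variable {p : ℝ≥0∞} {T : Type*} [Fintype T]

/-- The vector of `ℓᵖ` with coordinates `c t` at the places `g t`. -/
def blockVec (p : ℝ≥0∞) (g : T → ℕ) (c : T → ℂ) : lp (fun _ : ℕ => ℂ) p :=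
  ∑ t, lp.single p (g t) (c t)

/-- The functional `v ↦ ∑ t, d t * v (g t)` on `ℓᵖ`. -/
def blockFun (p : ℝ≥0∞) [Fact (1 ≤ p)] (g : T → ℕ) (d : T → ℂ) :
    lp (fun _ : ℕ => ℂ) p →L[ℂ] ℂ :=
  ∑ t, d t • lp.evalCLM ℂ (fun _ : ℕ => ℂ) p (g t)

lemma blockFun_apply [Fact (1 ≤ p)] (g : T → ℕ) (d : T → ℂ) (v : lp (fun _ : ℕ => ℂ) p) :
    blockFun p g d v = ∑ t, d t * v (g t) := by
  simp [blockFun, lp.evalCLM]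

lemma blockVec_apply (g : T → ℕ) (c : T → ℂ) (n : ℕ) :
    blockVec p g c n = ∑ t, if g t = n then c t else 0 := by
  simp only [blockVec, lp.coeFn_sum, Finset.sum_apply, lp.coeFn_single, Pi.single_apply, eq_comm]

lemma blockVec_apply_self {g : T → ℕ} (hg : g.Injective) (c : T → ℂ) (t : T) :
    blockVec p g c (g t) = c t := by
  classical
  simp [blockVec_apply, hg.eq_iff]

lemma sum_smul_blockVec {S : Type*} [Fintype S] (g : T → ℕ) (a : S → ℂ) (c : S → T → ℂ) :
    ∑ s, a s • blockVec p g (c s) = blockVec p g fun t => ∑ s, a s * c s t := by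
  ext n
  simp only [lp.coeFn_sum, Finset.sum_apply, lp.coeFn_smul, Pi.smul_apply, blockVec_apply,
    smul_eq_mul, Finset.mul_sum]
  rw [Finset.sum_comm]
  refine Finset.sum_congr rfl fun t _ => ?_
  split_ifs <;> simp

lemma norm_blockVec_rpow (hp : 0 < p.toReal) {g : T → ℕ} (hg : g.Injective) (c : T → ℂ) :
    ‖blockVec p g c‖ ^ p.toReal = ∑ t, ‖c t‖ ^ p.toReal := by
  classical
  have h := lp.norm_sum_single (E := fun _ : ℕ => ℂ) hp (Function.extend g c 0)
    (Finset.univ.image g)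
  rw [Finset.sum_image hg.injOn, Finset.sum_image hg.injOn] at h
  simpa only [hg.extend_apply, blockVec] using h

lemma norm_blockVec_of_norm_eq (hp : 0 < p.toReal) {g : T → ℕ} (hg : g.Injective) {c : T → ℂ}
    {C : ℝ} (hC : 0 ≤ C) (hc : ∀ t, ‖c t‖ = C) :
    ‖blockVec p g c‖ = (Fintype.card T : ℝ) ^ (1 / p.toReal) * C := by
  have h := norm_blockVec_rpow hp hg c
  simp only [hc, Finset.sum_const, Finset.card_univ, nsmul_eq_mul] at h
  rw [← Real.rpow_rpow_inv (lp.norm_nonneg' (blockVec p g c)) hp.ne', h,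
    Real.mul_rpow (by positivity) (by positivity), Real.rpow_rpow_inv hC hp.ne', one_div]

lemma norm_blockVec_ite [DecidableEq T] (hp : 0 < p.toReal) {g : T → ℕ} (hg : g.Injective)
    (t₀ : T) (C : ℂ) : ‖blockVec p g fun t => if t = t₀ then C else 0‖ = ‖C‖ := by
  have h := norm_blockVec_rpow hp hg fun t => if t = t₀ then C else 0
  rw [Finset.sum_eq_single t₀ (fun t _ ht => by simp [ht, Real.zero_rpow hp.ne']) (by simp),
    if_pos rfl] at h
  exact (Real.rpow_left_inj (lp.norm_nonneg' _) (norm_nonneg _) hp.ne').mp h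

lemma norm_blockFun_le [Fact (1 ≤ p)] (hp : 1 ≤ p.toReal) {g : T → ℕ} (hg : g.Injective)
    {d : T → ℂ} {D : ℝ} (hD : 0 ≤ D) (hd : ∀ t, ‖d t‖ ≤ D) :
    ‖blockFun p g d‖ ≤ D * (Fintype.card T : ℝ) ^ (1 - 1 / p.toReal) := by
  classical
  have hp0 : 0 < p.toReal := by linarith
  refine ContinuousLinearMap.opNorm_le_bound _ (by positivity) fun v => ?_
  have hsum : ∑ t, ‖v (g t)‖ ≤ (Fintype.card T : ℝ) ^ (1 - 1 / p.toReal) * ‖v‖ := by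
    refine (Real.rpow_le_rpow_iff (Finset.sum_nonneg fun _ _ => norm_nonneg _) (by positivity)
      hp0).mp ?_
    calc (∑ t, ‖v (g t)‖) ^ p.toReal
        ≤ (Fintype.card T : ℝ) ^ (p.toReal - 1) * ∑ t, ‖v (g t)‖ ^ p.toReal :=
          Real.rpow_sum_le_const_mul_sum_rpow_of_nonneg Finset.univ hp fun _ _ => norm_nonneg _
      _ ≤ (Fintype.card T : ℝ) ^ (p.toReal - 1) * ‖v‖ ^ p.toReal := by
          gcongr
          have h := lp.sum_rpow_le_norm_rpow hp0 v (Finset.univ.image g)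
          rwa [Finset.sum_image hg.injOn] at h
      _ = ((Fintype.card T : ℝ) ^ (1 - 1 / p.toReal) * ‖v‖) ^ p.toReal := by
          rw [Real.mul_rpow (by positivity) (norm_nonneg _), ← Real.rpow_mul (by positivity)]
          congr 2
          field_simp
  calc ‖blockFun p g d v‖ ≤ ∑ t, ‖d t * v (g t)‖ := by
        rw [blockFun_apply]; exact norm_sum_le _ _
    _ ≤ ∑ t, D * ‖v (g t)‖ := by
        refine Finset.sum_le_sum fun t _ => ?_
        rw [norm_mul]
        exact mul_le_mul_of_nonneg_right (hd t) (norm_nonneg _)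
    _ = D * ∑ t, ‖v (g t)‖ := by rw [Finset.mul_sum]
    _ ≤ D * ((Fintype.card T : ℝ) ^ (1 - 1 / p.toReal) * ‖v‖) := by gcongr
    _ = _ := by ring

/-- An unconditionality bound for a sequence passes to finite families of its members. -/
lemma norm_sum_family_le {E : Type*} [NormedAddCommGroup E] [NormedSpace ℂ E] {x : ℕ → E} {K : ℝ}
    (hK : ∀ (n : ℕ) (a : ℕ → ℂ) (θ : ℕ → ℝ), (∀ i, θ i = 1 ∨ θ i = -1) →
      ‖∑ i ∈ Finset.range n, ((θ i : ℂ) * a i) • x i‖ ≤ K * ‖∑ i ∈ Finset.range n, a i • x i‖)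
    {g : T → ℕ} (hg : g.Injective) (a : T → ℂ) {θ : T → ℝ} (hθ : ∀ t, θ t = 1 ∨ θ t = -1) :
    ‖∑ t, ((θ t : ℂ) * a t) • x (g t)‖ ≤ K * ‖∑ t, a t • x (g t)‖ := by
  classical
  obtain ⟨n, hn⟩ : ∃ n, Finset.univ.image g ⊆ Finset.range n := Finset.exists_nat_subset_range _
  have hsum : ∀ b : ℕ → ℂ, (∀ i, i ∉ Set.range g → b i = 0) →
      ∑ i ∈ Finset.range n, b i • x i = ∑ t, b (g t) • x (g t) := fun b hb => by
    rw [← Finset.sum_image (f := fun i => b i • x i) hg.injOn]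
    refine (Finset.sum_subset hn fun i _ hi => ?_).symm
    rw [hb i (by simpa using hi), zero_smul]
  have hzero : ∀ i, i ∉ Set.range g → Function.extend g a 0 i = 0 := fun i hi =>
    Function.extend_apply' _ _ _ hi
  have h := hK n (Function.extend g a 0) (Function.extend g θ 1) fun i => by
    by_cases hi : i ∈ Set.range g
    · obtain ⟨t, rfl⟩ := hi
      rw [hg.extend_apply]
      exact hθ t
    · exact Or.inl (Function.extend_apply' _ _ _ hi)
  rw [hsum _ hzero, hsum (fun i => ((Function.extend g θ 1 i : ℝ) : ℂ) * Function.extend g a 0 i)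
    fun i hi => by simp [hzero i hi]] at h
  simpa only [hg.extend_apply] using h

/-! ### The block Walsh system -/

/-- The union of the index sets of all Walsh matrices. -/
abbrev Index : Type := Σ k : ℕ, (Fin k → Fin 4)

/-- The places of `ℕ` allotted to the `k`-th block. -/
def place (e : Index ≃ ℕ) (k : ℕ) (t : Fin k → Fin 4) : ℕ := e ⟨k, t⟩

lemma place_injective (e : Index ≃ ℕ) (k : ℕ) : (place e k).Injective := fun s t h => by
  simpa [place] using h

/-- The normalized Walsh vectors. -/
def walshVec (p : ℝ≥0∞) (e : Index ≃ ℕ) (i : Index) : lp (fun _ : ℕ => ℂ) p :=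
  blockVec p (place e i.1) fun t => (((4 : ℝ) ^ i.1) ^ (-(1 / p.toReal)) * walsh i.2 t : ℝ)

/-- The normalized Walsh functionals. -/
def walshFun (p : ℝ≥0∞) [Fact (1 ≤ p)] (e : Index ≃ ℕ) (i : Index) :
    lp (fun _ : ℕ => ℂ) p →L[ℂ] ℂ :=
  blockFun p (place e i.1) fun t => (((4 : ℝ) ^ i.1) ^ (-(1 - 1 / p.toReal)) * walsh i.2 t : ℝ)

lemma card_block (k : ℕ) : (Fintype.card (Fin k → Fin 4) : ℝ) = 4 ^ k := by simp

lemma norm_walshVec (hp : 0 < p.toReal) (e : Index ≃ ℕ) (i : Index) : ‖walshVec p e i‖ = 1 := by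
  have hN : (0 : ℝ) < 4 ^ i.1 := by positivity
  rw [walshVec, norm_blockVec_of_norm_eq hp (place_injective e i.1)
    (C := ((4 : ℝ) ^ i.1) ^ (-(1 / p.toReal))) (by positivity), card_block, ← Real.rpow_add hN,
    add_neg_cancel, Real.rpow_zero]
  intro t
  rw [Complex.norm_real, Real.norm_eq_abs, abs_mul, abs_walsh, mul_one, abs_of_nonneg]
  positivity

lemma norm_walshFun_le [Fact (1 ≤ p)] (hp : 1 ≤ p.toReal) (e : Index ≃ ℕ) (i : Index) :
    ‖walshFun p e i‖ ≤ 1 := by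
  have hN : (0 : ℝ) < 4 ^ i.1 := by positivity
  refine (norm_blockFun_le hp (place_injective e i.1)
    (D := ((4 : ℝ) ^ i.1) ^ (-(1 - 1 / p.toReal))) (by positivity) fun t => ?_).trans_eq ?_
  · rw [Complex.norm_real, Real.norm_eq_abs, abs_mul, abs_walsh, mul_one, abs_of_nonneg]
    positivity
  · rw [card_block, ← Real.rpow_add hN, neg_add_cancel, Real.rpow_zero]

lemma walshFun_walshVec [Fact (1 ≤ p)] (e : Index ≃ ℕ) (i j : Index) :
    walshFun p e i (walshVec p e j) = if i = j then 1 else 0 := by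
  obtain ⟨k, s⟩ := i
  obtain ⟨l, s'⟩ := j
  rw [walshFun, blockFun_apply]
  by_cases hkl : k = l
  · subst hkl
    have hN : (0 : ℝ) < 4 ^ k := by positivity
    simp only [walshVec, blockVec_apply_self (place_injective e k), ← Complex.ofReal_mul,
      ← Complex.ofReal_sum]
    have h : ∑ t, ((4 : ℝ) ^ k) ^ (-(1 - 1 / p.toReal)) * walsh s t *
        (((4 : ℝ) ^ k) ^ (-(1 / p.toReal)) * walsh s' t) = if s = s' then 1 else 0 := by
      have hscale : ((4 : ℝ) ^ k) ^ (-(1 - 1 / p.toReal)) * ((4 : ℝ) ^ k) ^ (-(1 / p.toReal)) *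
          4 ^ k = 1 := by
        rw [← Real.rpow_add hN, show -(1 - 1 / p.toReal) + -(1 / p.toReal) = -1 by ring,
          Real.rpow_neg_one, inv_mul_cancel₀ hN.ne']
      simp only [mul_mul_mul_comm _ (walsh s _), ← Finset.mul_sum, walsh_orthogonal]
      split_ifs
      · exact hscale
      · exact mul_zero _
    rw [h]
    by_cases hs : s = s' <;> simp [hs]
  · rw [if_neg fun h => hkl (congrArg Sigma.fst h)]
    refine Finset.sum_eq_zero fun t _ => ?_
    rw [walshVec, blockVec_apply, Finset.sum_eq_zero, mul_zero]
    intro t' _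
    rw [if_neg]
    intro h
    exact hkl (congrArg Sigma.fst (e.injective h)).symm

lemma norm_walshFun [Fact (1 ≤ p)] (hp : 1 ≤ p.toReal) (e : Index ≃ ℕ) (i : Index) :
    ‖walshFun p e i‖ = 1 := by
  refine le_antisymm (norm_walshFun_le hp e i) ?_
  have h := (walshFun p e i).le_opNorm (walshVec p e i)
  rwa [walshFun_walshVec, if_pos rfl, norm_one, norm_walshVec (by linarith), mul_one] at h

lemma sum_smul_walshVec (e : Index ≃ ℕ) {k : ℕ} (a : (Fin k → Fin 4) → ℝ) :
    ∑ s, (a s : ℂ) • walshVec p e ⟨k, s⟩ =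
      blockVec p (place e k) fun t =>
        (((4 : ℝ) ^ k) ^ (-(1 / p.toReal)) * ∑ s, a s * walsh s t : ℝ) := by
  refine (sum_smul_blockVec (place e k) (fun s => (a s : ℂ)) fun s t =>
    ((((4 : ℝ) ^ k) ^ (-(1 / p.toReal)) * walsh s t : ℝ) : ℂ)).trans ?_
  congr 1
  funext t
  rw [Finset.mul_sum, Complex.ofReal_sum]
  refine Finset.sum_congr rfl fun s _ => ?_
  rw [← Complex.ofReal_mul, mul_left_comm]

lemma single_mem_span_walshVec (e : Index ≃ ℕ) (n : ℕ) (c : ℂ) :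
    lp.single p n c ∈ Submodule.span ℂ (Set.range (walshVec p e)) := by
  obtain ⟨⟨k, t₀⟩, rfl⟩ := e.surjective n
  set C : ℝ := ((4 : ℝ) ^ k) ^ (-(1 / p.toReal)) * 4 ^ k
  have hC0 : (C : ℂ) ≠ 0 := Complex.ofReal_ne_zero.mpr (by positivity)
  have h : ∑ s, (walsh s t₀ : ℂ) • walshVec p e ⟨k, s⟩ = lp.single p (e ⟨k, t₀⟩) (C : ℂ) := by
    have horth : ∀ t : Fin k → Fin 4, ∑ s, walsh s t₀ * walsh s t = if t₀ = t then 4 ^ k else 0 :=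
      fun t => by simpa only [walsh_symm _ t₀, walsh_symm _ t] using walsh_orthogonal t₀ t
    rw [sum_smul_walshVec, blockVec, Finset.sum_eq_single t₀]
    · rw [horth, if_pos rfl]
      rfl
    · intro t _ ht
      rw [horth, if_neg ht.symm, mul_zero, Complex.ofReal_zero, lp.single_zero]
    · simp
  have hc : lp.single p (e ⟨k, t₀⟩) c =
      (c / C) • lp.single (E := fun _ : ℕ => ℂ) p (e ⟨k, t₀⟩) (C : ℂ) := by
    rw [← lp.single_smul, smul_eq_mul, div_mul_cancel₀ _ hC0]
  rw [hc, ← h]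
  exact Submodule.smul_mem _ _ <| Submodule.sum_mem _ fun s _ =>
    Submodule.smul_mem _ _ <| Submodule.subset_span ⟨_, rfl⟩

lemma span_walshVec_dense [Fact (1 ≤ p)] (hp : p ≠ ⊤) (e : Index ≃ ℕ) :
    (Submodule.span ℂ (Set.range (walshVec p e))).topologicalClosure = ⊤ := by
  refine eq_top_iff.mpr fun v _ => ?_
  exact mem_closure_of_tendsto (lp.hasSum_single hp v) <| Filter.Eventually.of_forall fun F =>
    Submodule.sum_mem _ fun n _ => single_mem_span_walshVec e n _

lemma eq_zero_of_walshFun_eq_zero [Fact (1 ≤ p)] (e : Index ≃ ℕ) (v : lp (fun _ : ℕ => ℂ) p)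
    (hv : ∀ i, walshFun p e i v = 0) : v = 0 := by
  ext n
  obtain ⟨⟨k, t₀⟩, rfl⟩ := e.surjective n
  have hs : ∀ s : Fin k → Fin 4, ∑ t, (walsh s t : ℂ) * v (place e k t) = 0 := fun s => by
    have h := hv ⟨k, s⟩
    simp only [walshFun, blockFun_apply, Complex.ofReal_mul, mul_assoc, ← Finset.mul_sum] at h
    refine (mul_eq_zero.mp h).resolve_left (Complex.ofReal_ne_zero.mpr ?_)
    positivity
  have h : ∑ s, (walsh s t₀ : ℂ) * ∑ t, (walsh s t : ℂ) * v (place e k t) = 0 := by simp [hs]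
  have horth : ∀ t : Fin k → Fin 4,
      ∑ s, (walsh s t₀ : ℂ) * (walsh s t : ℂ) = if t₀ = t then 4 ^ k else 0 := fun t => by
    have h := walsh_orthogonal t₀ t
    simp only [walsh_symm t₀, walsh_symm t] at h
    rw [← Finset.sum_congr rfl fun s _ => Complex.ofReal_mul (walsh s t₀) (walsh s t),
      ← Complex.ofReal_sum, h]
    split_ifs <;> simp
  simp only [Finset.mul_sum, ← mul_assoc] at h
  rw [Finset.sum_comm] at h
  simp only [← Finset.sum_mul, horth, ite_mul, zero_mul, Finset.sum_ite_eq, Finset.mem_univ,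
    if_true] at h
  exact (mul_eq_zero.mp h).resolve_left (pow_ne_zero k (by norm_num))

lemma norm_sum_walshVec (hp : 0 < p.toReal) (e : Index ≃ ℕ) (k : ℕ) :
    ‖∑ s : Fin k → Fin 4, (1 : ℂ) • walshVec p e ⟨k, s⟩‖ = ((4 : ℝ) ^ (1 - 1 / p.toReal)) ^ k := by
  have hN : (0 : ℝ) < 4 ^ k := by positivity
  have h := sum_smul_walshVec (p := p) e fun _ : Fin k → Fin 4 => (1 : ℝ)
  rw [Complex.ofReal_one] at h
  rw [h]
  have hfun : (fun t : Fin k → Fin 4 =>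
      ((((4 : ℝ) ^ k) ^ (-(1 / p.toReal)) * ∑ s, 1 * walsh s t : ℝ) : ℂ)) = fun t =>
        if t = 0 then ((((4 : ℝ) ^ k) ^ (-(1 / p.toReal)) * 4 ^ k : ℝ) : ℂ) else 0 := by
    funext t
    simp only [one_mul, sum_walsh]
    split_ifs <;> simp
  rw [hfun, norm_blockVec_ite hp (place_injective e k), Complex.norm_real, Real.norm_eq_abs,
    abs_of_nonneg (by positivity), ← Real.rpow_add_one hN.ne', ← Real.rpow_natCast,
    ← Real.rpow_natCast, ← Real.rpow_mul (by norm_num), ← Real.rpow_mul (by norm_num)]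
  congr 1
  ring

lemma norm_sum_bent_walshVec (hp : 0 < p.toReal) (e : Index ≃ ℕ) (k : ℕ) :
    ‖∑ s : Fin k → Fin 4, (bent s : ℂ) • walshVec p e ⟨k, s⟩‖ = 2 ^ k := by
  have hN : (0 : ℝ) < 4 ^ k := by positivity
  rw [sum_smul_walshVec, norm_blockVec_of_norm_eq hp (place_injective e k)
    (C := ((4 : ℝ) ^ k) ^ (-(1 / p.toReal)) * 2 ^ k) (by positivity), card_block, ← mul_assoc,
    ← Real.rpow_add hN, add_neg_cancel, Real.rpow_zero, one_mul]
  intro t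
  rw [sum_bent_mul_walsh, Complex.norm_real, Real.norm_eq_abs, abs_mul, abs_mul, abs_bent, mul_one,
    abs_of_nonneg (by positivity), abs_of_nonneg (by positivity)]

/-- Two distinct positive reals have powers that are not uniformly comparable. -/
lemma eq_of_pow_le_mul_pow {u v K : ℝ} (hu : 0 < u) (hv : 0 < v)
    (huv : ∀ k : ℕ, u ^ k ≤ K * v ^ k) (hvu : ∀ k : ℕ, v ^ k ≤ K * u ^ k) : u = v := by
  have hle : ∀ {a b : ℝ}, 0 < a → 0 < b → (∀ k : ℕ, a ^ k ≤ K * b ^ k) → a ≤ b := by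
    intro a b ha hb hab
    by_contra! hlt
    obtain ⟨k, hk⟩ := pow_unbounded_of_one_lt K ((one_lt_div hb).mpr hlt)
    rw [div_pow, lt_div_iff₀ (by positivity)] at hk
    exact (hab k).not_gt hk
  exact le_antisymm (hle hu hv huv) (hle hv hu hvu)

lemma walshVec_not_unconditional [Fact (1 ≤ p)] (hp : 0 < p.toReal) (hp2 : p.toReal ≠ 2)
    (e : Index ≃ ℕ) : ¬ ∃ K : ℝ,
      ∀ (n : ℕ) (a : ℕ → ℂ) (θ : ℕ → ℝ), (∀ i, θ i = 1 ∨ θ i = -1) →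
        ‖∑ i ∈ Finset.range n, ((θ i : ℂ) * a i) • walshVec p e (e.symm i)‖ ≤
          K * ‖∑ i ∈ Finset.range n, a i • walshVec p e (e.symm i)‖ := by
  rintro ⟨K, hK⟩
  have hbent : ∀ {k : ℕ} (s : Fin k → Fin 4), bent s = 1 ∨ bent s = -1 := fun s =>
    eq_or_eq_neg_of_abs_eq (abs_bent s)
  have hfamily := fun k : ℕ => fun a : (Fin k → Fin 4) → ℂ =>
    norm_sum_family_le (x := fun i => walshVec p e (e.symm i)) hK (place_injective e k) a hbent
  simp only [place, Equiv.symm_apply_apply] at hfamily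
  have heq : (2 : ℝ) = 4 ^ (1 - 1 / p.toReal) := by
    refine eq_of_pow_le_mul_pow (K := K) (by norm_num) (by positivity) (fun k => ?_) fun k => ?_
    · simpa only [mul_one, norm_sum_walshVec hp, norm_sum_bent_walshVec hp] using
        hfamily k fun _ => 1
    · have hsq : ∀ s : Fin k → Fin 4, (bent s : ℂ) * (bent s : ℂ) = 1 := fun s => by
        rcases hbent s with h | h <;> simp [h]
      simpa only [hsq, norm_sum_walshVec hp, norm_sum_bent_walshVec hp] using
        hfamily k fun s => (bent s : ℂ)
  have hlog := congrArg Real.log heq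
  rw [Real.log_rpow (by norm_num), show (4 : ℝ) = 2 ^ 2 by norm_num, Real.log_pow] at hlog
  have hlog2 : Real.log 2 ≠ 0 := (Real.log_pos (by norm_num)).ne'
  apply hp2
  push_cast at hlog
  field_simp at hlog
  linarith

end LpAuerbach

end

/-- For `1 < p < ∞`, `p ≠ 2`, the complex Banach space `ℓᵖ` contains
an Auerbach basis `(xₙ, xₙ*)` that is not an unconditional Schauder basis: no constant
`K` satisfies `‖Σ θᵢ aᵢ xᵢ‖ ≤ K ‖Σ aᵢ xᵢ‖` for all finite scalar sequences `(aᵢ)` and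
all signs `θᵢ ∈ {−1, 1}`. -/
theorem lp_exists_Auerbach_basis_not_unconditional
    (p : ℝ≥0∞) [Fact (1 ≤ p)] (hp1 : 1 < p) (hptop : p ≠ ⊤) (hp2 : p ≠ 2) :
    ∃ (x : ℕ → lp (fun _ : ℕ => ℂ) p)
      (xs : ℕ → lp (fun _ : ℕ => ℂ) p →L[ℂ] ℂ),
      (∀ m n, xs m (x n) = if m = n then 1 else 0) ∧
      (Submodule.span ℂ (Set.range x)).topologicalClosure = ⊤ ∧
      (∀ v : lp (fun _ : ℕ => ℂ) p, (∀ n, xs n v = 0) → v = 0) ∧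
      (∀ n, ‖x n‖ = 1) ∧
      (∀ n, ‖xs n‖ = 1) ∧
      ¬ ∃ K : ℝ,
        ∀ (n : ℕ) (a : ℕ → ℂ) (θ : ℕ → ℝ), (∀ i, θ i = 1 ∨ θ i = -1) →
          ‖∑ i ∈ Finset.range n, ((θ i : ℂ) * a i) • x i‖ ≤
            K * ‖∑ i ∈ Finset.range n, a i • x i‖ := by
  have hr : 1 ≤ p.toReal := by
    simpa using (ENNReal.toReal_le_toReal ENNReal.one_ne_top hptop).mpr hp1.le
  have hr0 : 0 < p.toReal := by linarith
  have hr2 : p.toReal ≠ 2 := fun h => hp2 <| by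
    rw [← ENNReal.ofReal_toReal hptop, h, ENNReal.ofReal_ofNat]
  obtain ⟨e⟩ : Nonempty (LpAuerbach.Index ≃ ℕ) := nonempty_equiv_of_countable
  refine ⟨fun n => LpAuerbach.walshVec p e (e.symm n), fun n => LpAuerbach.walshFun p e (e.symm n),
    fun m n => ?_, ?_, fun v hv => ?_, fun n => LpAuerbach.norm_walshVec hr0 e _,
    fun n => LpAuerbach.norm_walshFun hr e _, LpAuerbach.walshVec_not_unconditional hr0 hr2 e⟩
  · simp only [LpAuerbach.walshFun_walshVec, e.symm.injective.eq_iff]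
  · rw [show (fun n => LpAuerbach.walshVec p e (e.symm n)) = LpAuerbach.walshVec p e ∘ e.symm
      from rfl, e.symm.surjective.range_comp]
    exact LpAuerbach.span_walshVec_dense hptop e
  · exact LpAuerbach.eq_zero_of_walshFun_eq_zero e v fun i => by
      simpa using hv (e i)
end
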